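/- arXiv:1305.2669 — 2 statements merged into one kernel-verified Lean document; each statement's English description precedes it below -/
import Mathlib

section
/- Let Ω ⊂ ℝⁿ (n ≥ 2) be a bounded open convex domain and let u be a function of class C³ on a neighborhood of the closure of Ω that is strictly convex (its Hessian D²u is positive definite) and satisfies det D²u = 1 in Ω together with u = 0 on ∂Ω. Then the function Σ_{k,l=1}^n u^{kl} u_k u_l (which equals K·|Du|^{n+1}, the Gauss curvature of the level set of u times |Du|^{n+1}) attains its maximum over the closure of Ω only on the boundary: for every interior point x ∈ Ω, Σ_{k,l} u^{kl}(x) u_k(x) u_l(x) < sup_{y ∈ ∂Ω} Σ_{k,l} u^{kl}(y) u_k(y) u_l(y). -/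
/-!
The quantity `φ = Σ u^{kl} u_k u_l` becomes transparent after a Legendre transform. Near an interior
point the gradient map `Du` is invertible; let `v` be the Legendre transform of `u`, so that `Dv` is
the inverse of `Du` and `N = D²v` is the inverse of `D²u`, positive definite of determinant one. In
the dual variable `y = Du(x)`, the function `φ` is `⟪y, N(y) y⟫`, the second derivative of `v` in the
radial direction.

Suppose that `φ` had a local maximum, at the dual point `y₀`. The second differences
`W(y) = v((1+s)y) + v((1-s)y) - 2 v(y)` satisfy `W = s² φ + o(s²)`. The Hessian of the dilate
`v((1±s) ·)` is `(1±s)²` times a positive definite matrix of determinant one, so the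
arithmetic–geometric mean inequality `n ≤ tr (N⁻¹ M)` (`le_trace_inv_mul`) gives
`tr (N⁻¹ D²W) ≥ n ((1+s)² + (1-s)² - 2) = 2 n s²`. The function `W - ε s² |y - y₀|²` still has
`tr (N⁻¹ D² ·) > 0` when `ε` is small, yet for small `s` it attains an interior maximum near `y₀`,
where its Hessian is nonpositive: a contradiction (`no_local_max_dual`). Only two derivatives of `v`
enter, which is why differences are used in place of differentiating the equation twice.

Hence `φ` has no local maximum in `Ω` (`no_interior_max`). Since `φ` is continuous on the compact
closure of `Ω`, its maximum there is attained on the frontier, and at no point of `Ω`.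
-/

open scoped BigOperators

/-- First partial derivative in direction `i`. -/
noncomputable def pd {n : ℕ} (i : Fin n) (f : EuclideanSpace ℝ (Fin n) → ℝ) :
    EuclideanSpace ℝ (Fin n) → ℝ :=
  fun x => fderiv ℝ f x (EuclideanSpace.single i 1)

/-- The Hessian matrix `(u_{ij})` of `u` at `x`. -/
noncomputable def hess {n : ℕ} (u : EuclideanSpace ℝ (Fin n) → ℝ)
    (x : EuclideanSpace ℝ (Fin n)) : Matrix (Fin n) (Fin n) ℝ :=
  Matrix.of fun i j => pd i (pd j u) x

/-! ### Traces against inverse matrices -/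

open scoped MatrixOrder in
lemma trace_inv_mul_conj {n : ℕ} {A : Matrix (Fin n) (Fin n) ℝ} (hA : A.PosDef) :
    ∃ C : Matrix (Fin n) (Fin n) ℝ, A⁻¹ = C.conjTranspose * C := by
  obtain ⟨C, hC⟩ := CStarAlgebra.nonneg_iff_eq_star_mul_self.mp hA.inv.posSemidef.nonneg
  exact ⟨C, hC⟩

lemma trace_inv_mul_nonneg {n : ℕ} {A S : Matrix (Fin n) (Fin n) ℝ} (hA : A.PosDef)
    (hS : S.PosSemidef) : 0 ≤ (A⁻¹ * S).trace := by
  obtain ⟨C, hC⟩ := trace_inv_mul_conj hA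
  rw [hC, Matrix.mul_assoc, Matrix.trace_mul_comm]
  exact (hS.mul_mul_conjTranspose_same C).trace_nonneg

/-- The arithmetic–geometric mean inequality in the form `n ≤ tr (A⁻¹ B)` for `A` positive
definite and `B` positive semidefinite, both of determinant one: `A⁻¹ B` is conjugate to a positive semidefinite matrix of
determinant one, and `log λ ≤ λ - 1` is summed over its eigenvalues. -/
lemma le_trace_inv_mul {n : ℕ} {A B : Matrix (Fin n) (Fin n) ℝ} (hA : A.PosDef)
    (hB : B.PosSemidef) (hdA : A.det = 1) (hdB : B.det = 1) : (n : ℝ) ≤ (A⁻¹ * B).trace := by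
  obtain ⟨C, hC⟩ := trace_inv_mul_conj hA
  rw [hC, Matrix.mul_assoc, Matrix.trace_mul_comm]
  have hM := hB.mul_mul_conjTranspose_same C
  have hdet : (C * B * C.conjTranspose).det = 1 := by
    have h1 : (A⁻¹).det = 1 := by simp [hdA]
    rw [hC, Matrix.det_mul] at h1
    rw [Matrix.det_mul, Matrix.det_mul, hdB]
    linarith
  have hnn : ∀ i, 0 ≤ hM.isHermitian.eigenvalues i := hM.eigenvalues_nonneg
  have hprod : ∏ i, hM.isHermitian.eigenvalues i = 1 := by
    have := hM.isHermitian.det_eq_prod_eigenvalues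
    rw [hdet] at this
    simpa using this.symm
  have hpos : ∀ i, 0 < hM.isHermitian.eigenvalues i := fun i =>
    lt_of_le_of_ne (hnn i) fun h0 => by
      rw [Finset.prod_eq_zero (Finset.mem_univ i) h0.symm] at hprod
      exact zero_ne_one hprod
  have hlog : ∑ i, Real.log (hM.isHermitian.eigenvalues i) = 0 := by
    rw [← Real.log_prod (fun i _ => (hpos i).ne'), hprod, Real.log_one]
  have htr := hM.isHermitian.trace_eq_sum_eigenvalues
  have hle : ∑ i, Real.log (hM.isHermitian.eigenvalues i)
      ≤ ∑ i, (hM.isHermitian.eigenvalues i - 1) :=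
    Finset.sum_le_sum fun i _ => Real.log_le_sub_one_of_pos (hpos i)
  rw [hlog, Finset.sum_sub_distrib] at hle
  simp only [Finset.sum_const, Finset.card_univ, Fintype.card_fin, nsmul_eq_mul, mul_one] at hle
  simp only [RCLike.ofReal_real_eq_id, id] at htr
  rw [htr]
  linarith

/-! ### Second differences and second derivatives on the line -/

/-- A symmetric second difference with step `s` is at most `C s²` when the second derivative is
at most `C`. No continuity of the second derivative is assumed. -/
lemma second_difference_le {g g' g'' : ℝ → ℝ} {s C : ℝ} (hs : 0 ≤ s)
    (hg : ∀ τ ∈ Set.Icc (-s) s, HasDerivAt g (g' τ) τ)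
    (hg' : ∀ τ ∈ Set.Icc (-s) s, HasDerivAt g' (g'' τ) τ)
    (hC : ∀ τ ∈ Set.Icc (-s) s, g'' τ ≤ C) :
    g s + g (-s) - 2 * g 0 ≤ C * s ^ 2 := by
  have mem : ∀ τ ∈ Set.Icc 0 s, τ ∈ Set.Icc (-s) s ∧ -τ ∈ Set.Icc (-s) s := fun τ hτ =>
    ⟨⟨by linarith [hτ.1], hτ.2⟩, by linarith [hτ.2], by linarith [hτ.1]⟩
  have h1 : ∀ τ ∈ Set.Icc 0 s, HasDerivAt (fun τ => 2 * C * τ - (g' τ - g' (-τ)))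
      (2 * C - (g'' τ + g'' (-τ))) τ := fun τ hτ => by
    have a := hg' τ (mem τ hτ).1
    have b := (hg' (-τ) (mem τ hτ).2).scomp τ (hasDerivAt_neg τ)
    have := ((hasDerivAt_id τ).const_mul (2 * C)).sub (a.sub b)
    exact this.congr_deriv (by simp)
  have h0 : ∀ τ ∈ Set.Icc 0 s, HasDerivAt (fun τ => C * τ ^ 2 - (g τ + g (-τ)))
      (2 * C * τ - (g' τ - g' (-τ))) τ := fun τ hτ => by
    have a := hg τ (mem τ hτ).1
    have b := (hg (-τ) (mem τ hτ).2).scomp τ (hasDerivAt_neg τ)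
    have := ((hasDerivAt_pow 2 τ).const_mul C).sub (a.add b)
    exact this.congr_deriv (by simp; ring)
  have m1 : MonotoneOn (fun τ => 2 * C * τ - (g' τ - g' (-τ))) (Set.Icc 0 s) := by
    refine monotoneOn_of_hasDerivWithinAt_nonneg (convex_Icc 0 s)
      (fun τ hτ => (h1 τ hτ).continuousAt.continuousWithinAt)
      (fun τ hτ => (h1 τ (interior_subset hτ)).hasDerivWithinAt) fun τ hτ => ?_
    have := mem τ (interior_subset hτ)
    linarith [hC _ this.1, hC _ this.2]
  have m0 : MonotoneOn (fun τ => C * τ ^ 2 - (g τ + g (-τ))) (Set.Icc 0 s) := by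
    refine monotoneOn_of_hasDerivWithinAt_nonneg (convex_Icc 0 s)
      (fun τ hτ => (h0 τ hτ).continuousAt.continuousWithinAt)
      (fun τ hτ => (h0 τ (interior_subset hτ)).hasDerivWithinAt) fun τ hτ => ?_
    have := m1 (Set.left_mem_Icc.2 hs) (interior_subset hτ) (interior_subset hτ).1
    simpa using this
  have := m0 (Set.left_mem_Icc.2 hs) (Set.right_mem_Icc.2 hs) hs
  simp at this
  linarith

open Filter Topology in
/-- The second-order necessary condition at a local maximum, for a function that is only twice
differentiable at the point itself. -/
lemma second_deriv_nonpos {j j' : ℝ → ℝ} {c : ℝ} (hmax : IsLocalMax j 0)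
    (hj : ∀ᶠ τ in 𝓝 0, HasDerivAt j (j' τ) τ) (hj' : HasDerivAt j' c 0) : c ≤ 0 := by
  by_contra! hc
  have h0 : j' 0 = 0 := hmax.hasDerivAt_eq_zero hj.self_of_nhds
  have hpos : ∀ᶠ τ in 𝓝[>] (0 : ℝ), 0 < j' τ := by
    have hs := hasDerivAt_iff_tendsto_slope.mp hj'
    have h2 := (hs.mono_left (nhdsWithin_mono 0 (fun x (hx : 0 < x) => hx.ne'))).eventually
      (lt_mem_nhds hc)
    filter_upwards [h2, self_mem_nhdsWithin] with τ hτ hτ0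
    have hτ0 : 0 < τ := hτ0
    rw [slope_def_field, h0, sub_zero, sub_zero] at hτ
    exact (div_pos_iff_of_pos_right hτ0).mp hτ
  obtain ⟨δ, hδ, H⟩ := Metric.eventually_nhds_iff.mp
    ((hj.and hmax).and (eventually_nhdsWithin_iff.mp hpos))
  have hm : ∀ τ ∈ Set.Icc 0 (δ / 2), dist τ 0 < δ := fun τ hτ => by
    rw [Real.dist_eq, sub_zero, abs_of_nonneg hτ.1]; linarith [hτ.2]
  have hmono : StrictMonoOn j (Set.Icc 0 (δ / 2)) := by
    refine strictMonoOn_of_hasDerivWithinAt_pos (convex_Icc _ _)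
      (fun τ hτ => (H (hm τ hτ)).1.1.continuousAt.continuousWithinAt)
      (fun τ hτ => (H (hm τ (interior_subset hτ))).1.1.hasDerivWithinAt) fun τ hτ => ?_
    refine (H (hm τ (interior_subset hτ))).2 ?_
    rw [interior_Icc] at hτ
    exact hτ.1
  have hr : δ / 2 ∈ Set.Icc 0 (δ / 2) := Set.right_mem_Icc.2 (by positivity)
  have h1 := hmono (Set.left_mem_Icc.2 (by positivity)) hr (by positivity)
  exact absurd (H (hm _ hr)).1.2 (not_le.2 h1)

/-! ### The maximum principle for the dual function -/

open Filter Topology Matrix in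
open scoped RealInnerProductSpace in
/-- The maximum principle on the dual side. Here `v` has gradient `G` and Hessian `N` on a ball
around `y₀`, with `N` positive definite of determinant one; then the radial second derivative
`⟪y, N y⟫` cannot be maximal at `y₀`. Third derivatives of `v` are never taken: the function to
which the maximum principle is applied is a second difference of `v` under dilations. The bound
`T` on `tr N⁻¹` fixes the size of the quadratic perturbation. -/
lemma no_local_max_dual {n : ℕ} (hn : 1 ≤ n) {y₀ : EuclideanSpace ℝ (Fin n)} {R T : ℝ}
    (hR : 0 < R) (hT : 0 < T) {v : EuclideanSpace ℝ (Fin n) → ℝ}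
    {G : EuclideanSpace ℝ (Fin n) → EuclideanSpace ℝ (Fin n)}
    {N : EuclideanSpace ℝ (Fin n) → Matrix (Fin n) (Fin n) ℝ}
    (hv : ∀ y ∈ Metric.ball y₀ R, HasFDerivAt v (innerSL ℝ (G y)) y)
    (hG : ∀ y ∈ Metric.ball y₀ R, HasFDerivAt G (toEuclideanCLM (𝕜 := ℝ) (N y)) y)
    (hN : ∀ y ∈ Metric.ball y₀ R, (N y).PosDef)
    (hdet : ∀ y ∈ Metric.ball y₀ R, (N y).det = 1)
    (htr : ∀ y ∈ Metric.ball y₀ R, (N y)⁻¹.trace < T)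
    (hmax : ∀ y ∈ Metric.ball y₀ R, ⟪y, toEuclideanCLM (𝕜 := ℝ) (N y) y⟫ ≤
      ⟪y₀, toEuclideanCLM (𝕜 := ℝ) (N y₀) y₀⟫)
    (hcont : ContinuousAt (fun y => ⟪y, toEuclideanCLM (𝕜 := ℝ) (N y) y⟫) y₀) : False := by
  set q : EuclideanSpace ℝ (Fin n) → ℝ := fun y => ⟪y, toEuclideanCLM (𝕜 := ℝ) (N y) y⟫ with hq
  set q₀ := q y₀ with hq₀
  set r := R / 2 with hr
  have hr0 : 0 < r := by positivity
  set ε := 1 / T with hε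
  have hε0 : 0 < ε := by positivity
  set δ := ε * r ^ 2 / 4 with hδ
  have hδ0 : 0 < δ := by positivity
  -- smallness conditions on the dilation parameter: dilates stay in the ball of radius `R`, and
  -- the second radial derivative is within `δ` of `q₀`
  have hsmall : ∀ᶠ τ in 𝓝 (0 : ℝ), (0 < 1 + τ ∧ |τ| * (‖y₀‖ + R) < r) ∧
      q₀ / (1 + τ) ^ 2 < q₀ + δ ∧ q₀ - δ < q ((1 + τ) • y₀) / (1 + τ) ^ 2 := by
    have c1 : ContinuousAt (fun τ : ℝ => q₀ / (1 + τ) ^ 2) 0 :=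
      ContinuousAt.div (by fun_prop) (by fun_prop) (by norm_num)
    have c2 : ContinuousAt (fun τ : ℝ => q ((1 + τ) • y₀) / (1 + τ) ^ 2) 0 := by
      refine ContinuousAt.div ?_ (by fun_prop) (by norm_num)
      refine ContinuousAt.comp_of_eq (y := y₀) hcont ?_ (by simp)
      fun_prop
    refine (Eventually.and ?_ ?_).and (Eventually.and ?_ ?_)
    · exact (by fun_prop : ContinuousAt (fun τ : ℝ => 1 + τ) 0).eventually
        (lt_mem_nhds (by norm_num))
    · exact (by fun_prop : ContinuousAt (fun τ : ℝ => |τ| * (‖y₀‖ + R)) 0).eventually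
        (gt_mem_nhds (by simpa using hr0))
    · exact c1.eventually (gt_mem_nhds (by simpa using hδ0))
    · exact c2.eventually (lt_mem_nhds (by simpa [hq₀] using hδ0))
  obtain ⟨ρ, hρ, hsm⟩ := Metric.eventually_nhds_iff.mp hsmall
  set s := ρ / 2 with hs
  have hs0 : 0 < s := by positivity
  have hS : ∀ τ ∈ Set.Icc (-s) s, (0 < 1 + τ ∧ |τ| * (‖y₀‖ + R) < r) ∧
      q₀ / (1 + τ) ^ 2 < q₀ + δ ∧ q₀ - δ < q ((1 + τ) • y₀) / (1 + τ) ^ 2 := fun τ hτ => by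
    refine hsm ?_
    rw [Real.dist_eq, sub_zero, abs_lt]
    constructor <;> linarith [hτ.1, hτ.2]
  have hball : ∀ τ ∈ Set.Icc (-s) s, ∀ y ∈ Metric.closedBall y₀ r,
      (1 + τ) • y ∈ Metric.ball y₀ R := fun τ hτ y hy => by
    rw [mem_closedBall_iff_norm] at hy
    rw [mem_ball_iff_norm]
    have e : (1 + τ) • y - y₀ = (y - y₀) + τ • y := by rw [add_smul, one_smul]; abel
    have hyn : ‖y‖ ≤ ‖y₀‖ + R := by
      have := norm_add_le y₀ (y - y₀)
      rw [add_sub_cancel] at this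
      linarith
    calc ‖(1 + τ) • y - y₀‖ ≤ ‖y - y₀‖ + |τ| * ‖y‖ := by
          rw [e]; exact (norm_add_le _ _).trans (by rw [norm_smul, Real.norm_eq_abs])
      _ ≤ r + |τ| * (‖y₀‖ + R) := by gcongr
      _ < R := by linarith [(hS τ hτ).1.2]
  have mem0 : (0 : ℝ) ∈ Set.Icc (-s) s := ⟨by linarith, hs0.le⟩
  have memp : s ∈ Set.Icc (-s) s := ⟨by linarith, le_rfl⟩
  have memm : -s ∈ Set.Icc (-s) s := ⟨le_rfl, by linarith⟩
  -- the radial profile of `v` through `y`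
  have hd1 : ∀ y ∈ Metric.closedBall y₀ r, ∀ τ ∈ Set.Icc (-s) s,
      HasDerivAt (fun τ : ℝ => v ((1 + τ) • y)) ⟪G ((1 + τ) • y), y⟫ τ := fun y hy τ hτ => by
    have h1 : HasDerivAt (fun τ : ℝ => (1 + τ) • y) y τ := by
      simpa using ((hasDerivAt_id τ).const_add 1).smul_const y
    exact ((hv _ (hball τ hτ y hy)).comp_hasDerivAt τ h1).congr_deriv (by simp)
  have hd2 : ∀ y ∈ Metric.closedBall y₀ r, ∀ τ ∈ Set.Icc (-s) s,
      HasDerivAt (fun τ : ℝ => ⟪G ((1 + τ) • y), y⟫) (q ((1 + τ) • y) / (1 + τ) ^ 2) τ :=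
    fun y hy τ hτ => by
    have h1 : HasDerivAt (fun τ : ℝ => (1 + τ) • y) y τ := by
      simpa using ((hasDerivAt_id τ).const_add 1).smul_const y
    have h2 := ((hG _ (hball τ hτ y hy)).comp_hasDerivAt τ h1).inner ℝ (hasDerivAt_const τ y)
    have h3 : q ((1 + τ) • y) / (1 + τ) ^ 2 =
        ⟪toEuclideanCLM (𝕜 := ℝ) (N ((1 + τ) • y)) y, y⟫ := by
      have : (1 + τ) ≠ 0 := (hS τ hτ).1.1.ne'
      simp only [hq, map_smul, real_inner_smul_left, real_inner_smul_right]
      rw [real_inner_comm]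
      field_simp
    rw [h3]
    simpa using h2
  set W : EuclideanSpace ℝ (Fin n) → ℝ := fun y =>
    v ((1 + s) • y) + v ((1 - s) • y) - 2 * v y with hW
  have hWup : ∀ y ∈ Metric.closedBall y₀ r, W y ≤ (q₀ + δ) * s ^ 2 := fun y hy => by
    have := second_difference_le (C := q₀ + δ) hs0.le (hd1 y hy) (hd2 y hy) fun τ hτ => by
      refine le_trans ?_ (hS τ hτ).2.1.le
      gcongr
      exact hmax _ (hball τ hτ y hy)
    simpa [hW, ← sub_eq_add_neg] using this
  have hWlow : (q₀ - δ) * s ^ 2 ≤ W y₀ := by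
    have hy : y₀ ∈ Metric.closedBall y₀ r := Metric.mem_closedBall_self hr0.le
    have := second_difference_le (C := -(q₀ - δ)) hs0.le (fun τ hτ => (hd1 y₀ hy τ hτ).neg)
      (fun τ hτ => (hd2 y₀ hy τ hτ).neg) fun τ hτ => by
      linarith [(hS τ hτ).2.2]
    simp [← sub_eq_add_neg] at this
    simp only [hW]
    linarith
  -- the penalty `ε s² ‖y - y₀‖²` exceeds the oscillation `2 δ s²` of the bounds on `W` at distance
  -- `r`, while lowering the linearized operator by less than the `2 n s²` gained from AM–GM
  set P : EuclideanSpace ℝ (Fin n) → ℝ := fun y => W y - ε * s ^ 2 * ‖y - y₀‖ ^ 2 with hP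
  set D : EuclideanSpace ℝ (Fin n) → EuclideanSpace ℝ (Fin n) := fun y =>
    (1 + s) • G ((1 + s) • y) + (1 - s) • G ((1 - s) • y) - (2 : ℝ) • G y
      - (2 * (ε * s ^ 2)) • (y - y₀) with hD
  have hbp : ∀ y ∈ Metric.closedBall y₀ r, (1 + s) • y ∈ Metric.ball y₀ R := hball s memp
  have hbm : ∀ y ∈ Metric.closedBall y₀ r, (1 - s) • y ∈ Metric.ball y₀ R := fun y hy => by
    simpa [← sub_eq_add_neg] using hball (-s) memm y hy
  have hb0 : ∀ y ∈ Metric.closedBall y₀ r, y ∈ Metric.ball y₀ R := fun y hy => by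
    simpa using hball 0 mem0 y hy
  have hsm (c : ℝ) (y : EuclideanSpace ℝ (Fin n)) : HasFDerivAt (fun y => c • y)
      (c • ContinuousLinearMap.id ℝ (EuclideanSpace ℝ (Fin n))) y :=
    (hasFDerivAt_id y).const_smul c
  have hPd : ∀ y ∈ Metric.closedBall y₀ r, HasFDerivAt P (innerSL ℝ (D y)) y := fun y hy => by
    have e1 := (hv _ (hbp y hy)).comp y (hsm (1 + s) y)
    have e2 := (hv _ (hbm y hy)).comp y (hsm (1 - s) y)
    have e3 := (hv _ (hb0 y hy)).const_mul 2
    have e4 := (((hasFDerivAt_id y).sub_const y₀).norm_sq).const_mul (ε * s ^ 2)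
    have := ((e1.add e2).sub e3).sub e4
    refine this.congr_fderiv ?_
    ext h
    simp [hD]
    ring
  have hDd : ∀ y ∈ Metric.closedBall y₀ r, HasFDerivAt D (toEuclideanCLM (𝕜 := ℝ)
      ((1 + s) ^ 2 • N ((1 + s) • y) + (1 - s) ^ 2 • N ((1 - s) • y) - (2 : ℝ) • N y
        - (2 * (ε * s ^ 2)) • 1)) y := fun y hy => by
    have e1 := ((hG _ (hbp y hy)).comp y (hsm (1 + s) y)).const_smul (1 + s)
    have e2 := ((hG _ (hbm y hy)).comp y (hsm (1 - s) y)).const_smul (1 - s)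
    have e3 := (hG _ (hb0 y hy)).const_smul (2 : ℝ)
    have e4 : HasFDerivAt (fun y => (2 * (ε * s ^ 2)) • (y - y₀))
        ((2 * (ε * s ^ 2)) • ContinuousLinearMap.id ℝ (EuclideanSpace ℝ (Fin n))) y :=
      ((hasFDerivAt_id y).sub_const y₀).const_smul (2 * (ε * s ^ 2))
    have := ((e1.add e2).sub e3).sub e4
    refine this.congr_fderiv ?_
    ext1 h
    simp [map_add, map_sub, map_smul, smul_smul, pow_two]
  -- the perturbed second difference has an interior maximum
  obtain ⟨y₁, hy₁, hy₁max⟩ := (isCompact_closedBall y₀ r).exists_isMaxOn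
    ⟨y₀, Metric.mem_closedBall_self hr0.le⟩
    (f := P) fun y hy => (hPd y hy).continuousAt.continuousWithinAt
  have hlt : y₁ ∈ Metric.ball y₀ r := by
    rw [mem_ball_iff_norm]
    rw [mem_closedBall_iff_norm] at hy₁
    refine lt_of_le_of_ne hy₁ fun heq => ?_
    have h1 : P y₀ ≤ P y₁ := hy₁max (Metric.mem_closedBall_self hr0.le)
    have h2 := hWup y₁ (mem_closedBall_iff_norm.mpr hy₁)
    simp only [hP, heq, sub_self, norm_zero] at h1
    have : 0 < s ^ 2 * δ := by positivity
    have h4 : ε * s ^ 2 * r ^ 2 = 4 * (s ^ 2 * δ) := by rw [hδ]; ring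
    nlinarith
  have hloc : ∀ᶠ y in 𝓝 y₁, y ∈ Metric.closedBall y₀ r :=
    mem_of_superset (Metric.isOpen_ball.mem_nhds hlt) Metric.ball_subset_closedBall
  set Q := (1 + s) ^ 2 • N ((1 + s) • y₁) + (1 - s) ^ 2 • N ((1 - s) • y₁) - (2 : ℝ) • N y₁
        - (2 * (ε * s ^ 2)) • (1 : Matrix (Fin n) (Fin n) ℝ) with hQ
  have hNp := hN _ (hbp y₁ hy₁)
  have hNm := hN _ (hbm y₁ hy₁)
  have hN0 := hN _ (hb0 y₁ hy₁)
  have hQneg : ∀ h : EuclideanSpace ℝ (Fin n), ⟪h, toEuclideanCLM (𝕜 := ℝ) Q h⟫ ≤ 0 := fun h => by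
    have hline : ∀ τ : ℝ, HasDerivAt (fun τ : ℝ => y₁ + τ • h) h τ := fun τ => by
      simpa using ((hasDerivAt_id τ).smul_const h).const_add y₁
    have hl0 : Tendsto (fun τ : ℝ => y₁ + τ • h) (𝓝 0) (𝓝 y₁) := by
      simpa using (hline 0).continuousAt.tendsto
    refine second_deriv_nonpos (j := fun τ => P (y₁ + τ • h)) (j' := fun τ => ⟪D (y₁ + τ • h), h⟫)
      ?_ ?_ ?_
    · filter_upwards [hl0.eventually hloc] with τ hτ
      simpa using hy₁max hτ
    · filter_upwards [hl0.eventually hloc] with τ hτ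
      exact (hPd _ hτ).comp_hasDerivAt τ (hline τ)
    · have hDd' := hDd y₁ hy₁
      rw [← hQ] at hDd'
      have h2 := (HasFDerivAt.comp_hasDerivAt_of_eq (0 : ℝ) hDd' (hline 0) (by simp)).inner ℝ
        (hasDerivAt_const 0 h)
      rw [real_inner_comm]
      simpa using h2
  have hQps : (-Q).PosSemidef := by
    refine Matrix.PosSemidef.of_dotProduct_mulVec_nonneg ?_ fun x => ?_
    · have tp : (N ((1 + s) • y₁))ᵀ = N ((1 + s) • y₁) := hNp.isHermitian.eq
      have tm : (N ((1 - s) • y₁))ᵀ = N ((1 - s) • y₁) := hNm.isHermitian.eq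
      have t0 : (N y₁)ᵀ = N y₁ := hN0.isHermitian.eq
      simp [Matrix.IsHermitian, hQ, tp, tm, t0]
    · have := hQneg (WithLp.toLp 2 x)
      rw [inner_toEuclideanCLM] at this
      simp only [Matrix.neg_mulVec, dotProduct_neg, star_trivial]
      simpa using this
  -- `tr (N⁻¹ Q) ≤ 0`, whereas AM–GM bounds it below by
  -- `n ((1 + s)² + (1 - s)² - 2) - 2 ε s² tr N⁻¹ = 2 s² (n - ε tr N⁻¹) > 0`
  have ht := trace_inv_mul_nonneg hN0 hQps
  have hu0 : IsUnit (N y₁).det := by rw [hdet _ (hb0 y₁ hy₁)]; exact isUnit_one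
  have hp := le_trace_inv_mul hN0 hNp.posSemidef (hdet _ (hb0 y₁ hy₁)) (hdet _ (hbp y₁ hy₁))
  have hm := le_trace_inv_mul hN0 hNm.posSemidef (hdet _ (hb0 y₁ hy₁)) (hdet _ (hbm y₁ hy₁))
  have htT := htr _ (hb0 y₁ hy₁)
  simp only [hQ, Matrix.mul_neg, Matrix.trace_neg, Matrix.mul_sub, Matrix.mul_add, Matrix.mul_smul,
    Matrix.trace_sub, Matrix.trace_add, Matrix.trace_smul, Matrix.nonsing_inv_mul _ hu0, Matrix.mul_one,
    Matrix.trace_one, smul_eq_mul, Fintype.card_fin] at ht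
  have hp' := mul_le_mul_of_nonneg_left hp (sq_nonneg (1 + s))
  have hm' := mul_le_mul_of_nonneg_left hm (sq_nonneg (1 - s))
  have hεt : ε * (N y₁)⁻¹.trace < 1 := by
    rw [hε, one_div, inv_mul_lt_iff₀ hT, mul_one]; exact htT
  have hn' : (1 : ℝ) ≤ n := by exact_mod_cast hn
  have : 0 < s ^ 2 * (n - ε * (N y₁)⁻¹.trace) := by
    have : 0 < n - ε * (N y₁)⁻¹.trace := by linarith
    positivity
  nlinarith

/-! ### The gradient map and its derivative -/

lemma pd_contDiffOn {n : ℕ} {m m' : ℕ∞} {f : EuclideanSpace ℝ (Fin n) → ℝ}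
    {U : Set (EuclideanSpace ℝ (Fin n))} (hU : IsOpen U) (hf : ContDiffOn ℝ m' f U)
    (hm : m + 1 ≤ m') (i : Fin n) : ContDiffOn ℝ m (pd i f) U :=
  (hf.fderiv_of_isOpen hU (by exact_mod_cast hm)).clm_apply contDiffOn_const

/-- The gradient of `u`, assembled from the partial derivatives `pd k u`. -/
noncomputable def gradVec {n : ℕ} (u : EuclideanSpace ℝ (Fin n) → ℝ)
    (x : EuclideanSpace ℝ (Fin n)) : EuclideanSpace ℝ (Fin n) :=
  WithLp.toLp 2 fun k => pd k u x

lemma fderiv_eq_sum_pd {n : ℕ} (f : EuclideanSpace ℝ (Fin n) → ℝ)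
    (x h : EuclideanSpace ℝ (Fin n)) : fderiv ℝ f x h = ∑ i, h i * pd i f x := by
  have hh : h = ∑ i, h i • EuclideanSpace.single i (1 : ℝ) := by
    ext j
    simp [Finset.sum_apply, Pi.single_apply]
  conv_lhs => rw [hh]
  simp [pd]

lemma fderiv_eq_innerSL_gradVec {n : ℕ} (f : EuclideanSpace ℝ (Fin n) → ℝ)
    (x : EuclideanSpace ℝ (Fin n)) : fderiv ℝ f x = innerSL ℝ (gradVec f x) := by
  ext1 h
  rw [fderiv_eq_sum_pd]
  simp [gradVec, PiLp.inner_apply]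

open Matrix in
lemma hasStrictFDerivAt_gradVec {n : ℕ} {u : EuclideanSpace ℝ (Fin n) → ℝ}
    {U : Set (EuclideanSpace ℝ (Fin n))} (hU : IsOpen U) (hu : ContDiffOn ℝ 3 u U)
    {x : EuclideanSpace ℝ (Fin n)} (hx : x ∈ U) (hsymm : (hess u x).IsHermitian) :
    HasStrictFDerivAt (gradVec u) (toEuclideanCLM (𝕜 := ℝ) (hess u x)) x := by
  rw [hasStrictFDerivAt_euclidean]
  intro k
  have hk : ContDiffAt ℝ 2 (pd k u) x :=
    (pd_contDiffOn (m := 2) (m' := 3) hU hu (by norm_num) k).contDiffAt (hU.mem_nhds hx)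
  refine (hk.hasStrictFDerivAt (by norm_num)).congr_fderiv ?_
  ext1 h
  rw [fderiv_eq_sum_pd]
  simp only [ContinuousLinearMap.comp_apply, PiLp.proj_apply, ofLp_toEuclideanCLM, mulVec,
    dotProduct]
  refine Finset.sum_congr rfl fun i _ => ?_
  have : hess u x k i = hess u x i k := by simpa using hsymm.apply i k
  rw [this, mul_comm]
  rfl

open Matrix in
open scoped RealInnerProductSpace in
lemma sum_eq_inner {n : ℕ} (u : EuclideanSpace ℝ (Fin n) → ℝ) (x : EuclideanSpace ℝ (Fin n)) :
    ∑ k, ∑ l, (hess u x)⁻¹ k l * pd k u x * pd l u x =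
      ⟪gradVec u x, toEuclideanCLM (𝕜 := ℝ) (hess u x)⁻¹ (gradVec u x)⟫ := by
  rw [inner_toEuclideanCLM]
  simp only [dotProduct, mulVec, gradVec, Finset.mul_sum]
  exact Finset.sum_congr rfl fun k _ => Finset.sum_congr rfl fun l _ => by ring

lemma continuousOn_hess {n : ℕ} {u : EuclideanSpace ℝ (Fin n) → ℝ}
    {U : Set (EuclideanSpace ℝ (Fin n))} (hU : IsOpen U) (hu : ContDiffOn ℝ 3 u U) :
    ContinuousOn (hess u) U := by
  refine continuousOn_pi.2 fun i => continuousOn_pi.2 fun j => ?_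
  exact (pd_contDiffOn (m := 1) (m' := 2) hU
    (pd_contDiffOn (m := 2) (m' := 3) hU hu (by norm_num) j) (by norm_num) i).continuousOn

/-! ### Absence of interior maxima -/

open Filter Topology Matrix in
open scoped RealInnerProductSpace in
/-- The quantity `Σ u^{kl} u_k u_l` has no local maximum in `Ω`. Let `e` be the local
homeomorphism that the inverse function theorem extracts from the gradient map. The Legendre transform
`y ↦ ⟪e.symm y, y⟫ - u (e.symm y)` has gradient `e.symm` and Hessian `(D²u)⁻¹ ∘ e.symm`, which is
the situation of `no_local_max_dual`. -/
lemma no_interior_max {n : ℕ} (hn : 1 ≤ n) {Ω : Set (EuclideanSpace ℝ (Fin n))}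
    (hΩo : IsOpen Ω) {u : EuclideanSpace ℝ (Fin n) → ℝ} (hu : ContDiffOn ℝ 3 u Ω)
    (hpos : ∀ x ∈ Ω, (hess u x).PosDef) (hMA : ∀ x ∈ Ω, (hess u x).det = 1)
    {φ : EuclideanSpace ℝ (Fin n) → ℝ} (hφ : ContinuousOn φ Ω)
    (hφdef : ∀ x, φ x = ⟪gradVec u x, toEuclideanCLM (𝕜 := ℝ) (hess u x)⁻¹ (gradVec u x)⟫)
    {x₀ : EuclideanSpace ℝ (Fin n)} (hx₀ : x₀ ∈ Ω) : ¬ IsLocalMax φ x₀ := by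
  intro hmax
  have hinv : ∀ x ∈ Ω, IsUnit (hess u x).det := fun x hx => by rw [hMA x hx]; exact isUnit_one
  have hequiv : ∀ x ∈ Ω, ∃ A : EuclideanSpace ℝ (Fin n) ≃L[ℝ] EuclideanSpace ℝ (Fin n),
      (A : EuclideanSpace ℝ (Fin n) →L[ℝ] EuclideanSpace ℝ (Fin n)) =
        toEuclideanCLM (𝕜 := ℝ) (hess u x) ∧
      (A.symm : EuclideanSpace ℝ (Fin n) →L[ℝ] EuclideanSpace ℝ (Fin n)) =
        toEuclideanCLM (𝕜 := ℝ) (hess u x)⁻¹ := fun x hx => by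
    refine ⟨ContinuousLinearEquiv.equivOfInverse (toEuclideanCLM (𝕜 := ℝ) (hess u x))
      (toEuclideanCLM (𝕜 := ℝ) (hess u x)⁻¹) (fun h => ?_) (fun h => ?_), ?_, ?_⟩
    · rw [← mul_apply_eq_comp, ← map_mul, nonsing_inv_mul _ (hinv x hx), map_one]
      rfl
    · rw [← mul_apply_eq_comp, ← map_mul, mul_nonsing_inv _ (hinv x hx), map_one]
      rfl
    · ext1 h; rfl
    · ext1 h; rfl
  have hgrad : ∀ x ∈ Ω, HasStrictFDerivAt (gradVec u) (toEuclideanCLM (𝕜 := ℝ) (hess u x)) x :=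
    fun x hx => hasStrictFDerivAt_gradVec hΩo hu hx (hpos x hx).isHermitian
  obtain ⟨A₀, hA₀, -⟩ := hequiv x₀ hx₀
  have hst : HasStrictFDerivAt (gradVec u)
      (A₀ : EuclideanSpace ℝ (Fin n) →L[ℝ] EuclideanSpace ℝ (Fin n)) x₀ := by
    rw [hA₀]; exact hgrad x₀ hx₀
  set e := hst.toOpenPartialHomeomorph (gradVec u) with he
  have hecoe : ∀ x, e x = gradVec u x := fun x => rfl
  set y₀ := gradVec u x₀ with hy₀
  have hxs : x₀ ∈ e.source := hst.mem_toOpenPartialHomeomorph_source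
  have hy₀t : y₀ ∈ e.target := hst.image_mem_toOpenPartialHomeomorph_target
  have hGy₀ : e.symm y₀ = x₀ := e.left_inv hxs
  have htend : Tendsto e.symm (𝓝 y₀) (𝓝 x₀) := by
    simpa [ContinuousAt, hGy₀] using e.continuousAt_symm hy₀t
  have hΩn : Ω ∈ 𝓝 x₀ := hΩo.mem_nhds hx₀
  set T := |(hess u x₀).trace| + 1 with hT
  have hT0 : 0 < T := by positivity
  have htrc : ∀ᶠ x in 𝓝 x₀, (hess u x).trace < T := by
    have hc : ContinuousAt (fun x => (hess u x).trace) x₀ :=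
      (continuous_id.matrix_trace.continuousAt).comp
        ((continuousOn_hess hΩo hu).continuousAt hΩn)
    exact hc.eventually (gt_mem_nhds (by linarith [le_abs_self (hess u x₀).trace]))
  have hev : ∀ᶠ y in 𝓝 y₀, y ∈ e.target ∧ e.symm y ∈ Ω ∧ (hess u (e.symm y)).trace < T ∧
      φ (e.symm y) ≤ φ x₀ :=
    (e.open_target.eventually_mem hy₀t).and <| (htend.eventually hΩn).and <|
      (htend.eventually htrc).and (htend.eventually hmax)
  obtain ⟨R, hR, H⟩ := Metric.eventually_nhds_iff_ball.mp hev
  have hright : ∀ y ∈ Metric.ball y₀ R, gradVec u (e.symm y) = y := fun y hy =>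
    e.right_inv (H y hy).1
  have hq : ∀ y ∈ Metric.ball y₀ R,
      ⟪y, toEuclideanCLM (𝕜 := ℝ) (hess u (e.symm y))⁻¹ y⟫ = φ (e.symm y) := fun y hy => by
    rw [hφdef, hright y hy]
  have hGd : ∀ y ∈ Metric.ball y₀ R, HasFDerivAt e.symm
      (toEuclideanCLM (𝕜 := ℝ) (hess u (e.symm y))⁻¹) y := fun y hy => by
    obtain ⟨A, hA, hA'⟩ := hequiv _ (H y hy).2.1
    rw [← hA']
    refine e.hasFDerivAt_symm (H y hy).1 ?_
    rw [hA]
    exact (hgrad _ (H y hy).2.1).hasFDerivAt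
  have hy₀b : y₀ ∈ Metric.ball y₀ R := Metric.mem_ball_self hR
  refine no_local_max_dual hn hR hT0 (v := fun y => ⟪e.symm y, y⟫ - u (e.symm y)) (G := e.symm)
    (N := fun y => (hess u (e.symm y))⁻¹) ?_ hGd ?_ ?_ ?_ ?_ ?_
  · intro y hy
    have hud : HasFDerivAt u (innerSL ℝ y) (e.symm y) := by
      have := ((hu.contDiffAt (hΩo.mem_nhds (H y hy).2.1)).differentiableAt
        (by norm_num)).hasFDerivAt
      rwa [fderiv_eq_innerSL_gradVec, hright y hy] at this
    have h1 := ((hGd y hy).inner ℝ (hasFDerivAt_id y)).sub (hud.comp y (hGd y hy))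
    refine h1.congr_fderiv ?_
    ext1 h
    simp [real_inner_comm]
  · exact fun y hy => (hpos _ (H y hy).2.1).inv
  · intro y hy
    simp [hMA _ (H y hy).2.1]
  · intro y hy
    rw [nonsing_inv_nonsing_inv _ (hinv _ (H y hy).2.1)]
    exact (H y hy).2.2.1
  · intro y hy
    rw [hq y hy, hq y₀ hy₀b, hGy₀]
    exact (H y hy).2.2.2
  · have hc : ContinuousAt (fun y => φ (e.symm y)) y₀ := by
      refine ContinuousAt.comp_of_eq (hφ.continuousAt hΩn) ?_ hGy₀
      exact e.continuousAt_symm hy₀t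
    refine hc.congr ?_
    filter_upwards [Metric.ball_mem_nhds y₀ hR] with y hy using (hq y hy).symm

/-- `K·|Du|^{n+1} = Σ u^{kl} u_k u_l` attains its maximum only on the boundary. -/
theorem gauss_curvature_strict_max_on_boundary {n : ℕ} (hn : 2 ≤ n)
    (Ω U : Set (EuclideanSpace ℝ (Fin n)))
    (hΩo : IsOpen Ω) (hΩc : Convex ℝ Ω) (hΩb : Bornology.IsBounded Ω)
    (hUo : IsOpen U) (hUcl : closure Ω ⊆ U)
    (u : EuclideanSpace ℝ (Fin n) → ℝ)
    (hu : ContDiffOn ℝ 3 u U)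
    (hpos : ∀ x ∈ Ω, (hess u x).PosDef)
    (hMA : ∀ x ∈ Ω, (hess u x).det = 1)
    (hbd : ∀ x ∈ frontier Ω, u x = 0) :
    ∀ x ∈ Ω,
      (∑ k, ∑ l, (hess u x)⁻¹ k l * pd k u x * pd l u x) <
        sSup ((fun y => ∑ k, ∑ l, (hess u y)⁻¹ k l * pd k u y * pd l u y) ''
          frontier Ω) := by
  intro x hx
  set φ : EuclideanSpace ℝ (Fin n) → ℝ :=
    fun y => ∑ k, ∑ l, (hess u y)⁻¹ k l * pd k u y * pd l u y with hφ
  change φ x < sSup (φ '' frontier Ω)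
  have hΩU : Ω ⊆ U := subset_closure.trans hUcl
  have hhess : ContinuousOn (hess u) (closure Ω) := (continuousOn_hess hUo hu).mono hUcl
  have hdet : ∀ y ∈ closure Ω, (hess u y).det = 1 :=
    Set.EqOn.of_subset_closure (f := fun y => (hess u y).det) (g := fun _ => 1) hMA
      (continuous_id.matrix_det.comp_continuousOn hhess) continuousOn_const
      subset_closure subset_rfl
  have hcont : ContinuousOn φ (closure Ω) := by
    -- where `det D²u = 1`, the inverse Hessian is the adjugate, a polynomial in the entries
    have h1 : ContinuousOn (fun y => ∑ k, ∑ l, (hess u y).adjugate k l * pd k u y * pd l u y)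
        (closure Ω) := by
      have hp : ∀ k, ContinuousOn (pd k u) (closure Ω) := fun k =>
        (pd_contDiffOn (m := 2) (m' := 3) hUo hu (by norm_num) k).continuousOn.mono hUcl
      refine continuousOn_finsetSum _ fun k _ => continuousOn_finsetSum _ fun l _ => ?_
      refine ((?_ : ContinuousOn _ _).mul (hp k)).mul (hp l)
      exact (continuous_id.matrix_adjugate.matrix_elem k l).comp_continuousOn hhess
    refine h1.congr fun y hy => ?_
    simp [hφ, Matrix.inv_def, hdet y hy]
  have hno : ∀ z ∈ Ω, ¬ IsLocalMax φ z := fun z hz =>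
    no_interior_max (by omega) hΩo (hu.mono hΩU) hpos hMA (hcont.mono subset_closure)
      (fun y => sum_eq_inner u y) hz
  have hcomp : IsCompact (closure Ω) := hΩb.isCompact_closure
  have hfsub : frontier Ω ⊆ closure Ω := frontier_subset_closure
  have hbdd : BddAbove (φ '' frontier Ω) :=
    (hcomp.bddAbove_image hcont).mono (Set.image_mono hfsub)
  obtain ⟨z, hz, hzmax⟩ := hcomp.exists_isMaxOn ⟨x, subset_closure hx⟩ hcont
  have hlocal : ∀ w ∈ Ω, φ z ≤ φ w → False := fun w hw hzw => hno w hw <| by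
    filter_upwards [hΩo.mem_nhds hw] with y hy using (hzmax (subset_closure hy)).trans hzw
  have hzf : z ∈ frontier Ω := by
    rw [hΩo.frontier_eq]
    exact ⟨hz, fun hzΩ => hlocal z hzΩ le_rfl⟩
  refine lt_of_lt_of_le ?_ (le_csSup hbdd ⟨z, hzf, rfl⟩)
  exact not_le.1 fun h => hlocal x hx h
end

section
/- Let Ω ⊂ ℝⁿ (n ≥ 2) be a bounded open convex domain and let u be a function of class C³ on a neighborhood of the closure of Ω that is strictly convex (its Hessian D²u is positive definite) and satisfies det D²u = 1 in Ω together with u = 0 on ∂Ω. Then the function Σ_{k,l=1}^n b^{kl} u_k u_l, with b^{kl} = (Δu) δ_{kl} − u_{kl} (this function equals H·|Du|³, the mean curvature of the level set of u times |Du|³), attains its maximum over the closure of Ω only on the boundary: for every interior point x ∈ Ω, Σ_{k,l} b^{kl}(x) u_k(x) u_l(x) < sup_{y ∈ ∂Ω} Σ_{k,l} b^{kl}(y) u_k(y) u_l(y). -/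
/-!
Write `p = Du`, `v_{kl} = p_k e_l - p_l e_k` and `φ = ∑ b^{kl} u_k u_l`. Since
`|p|² I - p pᵀ = ½ ∑_{k,l} v_{kl} v_{kl}ᵀ`, one has `2 φ = ∑_{k,l} D²u(v_{kl}, v_{kl})`
(`two_mul_curvature_eq`). For `u` of class `C⁴`, `φ` is a strict subsolution of the linearized
operator `L = u^{ij} ∂_i ∂_j`. Here `u` is only `C³`, so `φ` is only `C¹`, and the second
derivatives in `φ` are replaced by second differences along the moving directions `v_{kl}(x)`:

  `G_h(x) = ∑_{k,l} (u(x + h v_{kl}(x)) + u(x - h v_{kl}(x)) - 2 u(x))`.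

This function is `C²` and `G_h / h² → 2 φ` locally uniformly (`second_difference_error`).
Moreover `L G_h` is explicitly positive. Indeed `v_{kl} = J p` with `J` skew and `L p = 0`
(`linearized_gradient`), hence with `y = x + h v_{kl}(x)`, `B = I + h J D²u(x)`,

  `L (u(y(x))) = tr ((D²u(x))⁻¹ Bᵀ D²u(y) B) ≥ n + log det (⋯) = n + 2 log det B`,

because `tr N ≥ n + log det N` for positive definite `N` and both Hessians have determinant one.
As `J` has rank two, `det B = 1 + h² m_{kl}` exactly, where
`m_{kl} = u_{kk} u_{ll} - u_{kl}² ≥ 0` is a principal minor (`det_one_add_rot`). Since `L u = n`,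
summing gives `L G_h ≥ ∑ 4 log (1 + h² m_{kl})`.

If `φ` had an interior maximum at `x₁`, then `G_h - ε h² |x - x₁|²` would, for small `h`, have an
interior maximum on a small ball around `x₁`, which forces
`∑ 4 log (1 + h² m_{kl}) ≤ 2 ε h² tr (D²u)⁻¹` there (`max_point_inequality`); for small `ε` this
contradicts the positive lower bound of a minor on the ball (`no_interior_max`).
The operator `L` is evaluated as the sum of second derivatives along the columns of a matrix `W`
with `Wᵀ D²u(x) W = I`.
-/

open scoped BigOperators

/-- `b^{kl} = (Δu) δ_{kl} − u_{kl} = ∂σ₂(D²u)/∂u_{kl}`. -/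
noncomputable def bMat {n : ℕ} (u : EuclideanSpace ℝ (Fin n) → ℝ)
    (x : EuclideanSpace ℝ (Fin n)) : Matrix (Fin n) (Fin n) ℝ :=
  (hess u x).trace • (1 : Matrix (Fin n) (Fin n) ℝ) - hess u x

section helpers

open Matrix Filter Topology

/-! ### Matrix inequalities -/

/-- The sum over the eigenvalues of `log t ≤ t - 1`; it replaces concavity of `log det`. -/
lemma trace_ge_card_add_log_det {n : ℕ} {N : Matrix (Fin n) (Fin n) ℝ} (hN : N.PosDef) :
    (n : ℝ) + Real.log N.det ≤ N.trace := by
  have h1 := hN.1.trace_eq_sum_eigenvalues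
  have h2 := hN.1.det_eq_prod_eigenvalues
  simp only [RCLike.ofReal_real_eq_id, id_eq] at h1 h2
  rw [h1, h2, Real.log_prod (fun i _ => (hN.eigenvalues_pos i).ne')]
  have h3 : ∑ i, (1 + Real.log (hN.1.eigenvalues i)) ≤ ∑ i, hN.1.eigenvalues i :=
    Finset.sum_le_sum fun i _ => by
      have := Real.log_le_sub_one_of_pos (hN.eigenvalues_pos i)
      linarith
  simpa [Finset.sum_add_distrib] using h3

open scoped MatrixOrder in
lemma exists_normalizing {n : ℕ} {U : Matrix (Fin n) (Fin n) ℝ} (hU : U.PosDef) :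
    ∃ W : Matrix (Fin n) (Fin n) ℝ, Wᵀ * U * W = 1 := by
  obtain ⟨A, hA⟩ := CStarAlgebra.nonneg_iff_eq_star_mul_self.mp
    (nonneg_iff_posSemidef.mpr hU.posSemidef)
  rw [star_eq_conjTranspose, conjTranspose_eq_transpose_of_trivial] at hA
  have hdet : IsUnit A.det := by
    have h := hU.det_pos
    rw [hA, det_mul, det_transpose] at h
    exact isUnit_iff_ne_zero.mpr fun h0 => by simp [h0] at h
  refine ⟨A⁻¹, ?_⟩
  rw [hA, transpose_nonsing_inv, ← Matrix.mul_assoc, nonsing_inv_mul _ (by rwa [det_transpose]),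
    Matrix.one_mul, mul_nonsing_inv _ hdet]

/-- The lower bound for the linearized operator at a point with Hessian `U`, applied to a quantity
with Hessian `Bᵀ M B`; the hypothesis on `W` says `W Wᵀ = U⁻¹`. -/
lemma trace_congr_ge {n : ℕ} {U M W B : Matrix (Fin n) (Fin n) ℝ} (hM : M.PosDef)
    (hUdet : U.det = 1) (hMdet : M.det = 1) (hW : Wᵀ * U * W = 1) (hB : 0 < B.det) :
    (n : ℝ) + 2 * Real.log B.det ≤ ((B * W)ᵀ * M * (B * W)).trace := by
  have hW2 : W.det * W.det = 1 := by
    have := congrArg det hW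
    simpa [det_mul, hUdet] using this
  have hBW : IsUnit (B * W) := by
    rw [isUnit_iff_isUnit_det, det_mul, isUnit_iff_ne_zero]
    exact mul_ne_zero hB.ne' fun h0 => by simp [h0] at hW2
  have hpd : ((B * W)ᵀ * M * (B * W)).PosDef := by
    have := hM.conjTranspose_mul_mul_same (B := B * W) (mulVec_injective_of_isUnit hBW)
    rwa [conjTranspose_eq_transpose_of_trivial] at this
  have h := trace_ge_card_add_log_det hpd
  have hd : ((B * W)ᵀ * M * (B * W)).det = B.det ^ 2 := by
    rw [det_mul, det_mul, det_transpose, det_mul, hMdet]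
    linear_combination (B.det ^ 2) * hW2
  rw [hd, Real.log_pow] at h
  exact_mod_cast h

/-- The matrix of the infinitesimal rotation `e_k ↦ e_l`, `e_l ↦ -e_k`; it is zero if `k = l`. -/
def rotMat {n : ℕ} (k l : Fin n) : Matrix (Fin n) (Fin n) ℝ :=
  Matrix.single l k 1 - Matrix.single k l 1

/-- The perturbation has rank two, so the Weinstein–Aronszajn identity reduces this to a `2 × 2`
determinant, whose linear term in `h` vanishes by symmetry of `U`. -/
lemma det_one_add_rot {n : ℕ} (U : Matrix (Fin n) (Fin n) ℝ) (hU : U.IsHermitian)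
    (k l : Fin n) (h : ℝ) :
    (1 + h • (rotMat k l * U)).det = 1 + h ^ 2 * (U k k * U l l - U k l ^ 2) := by
  have hs : U l k = U k l := by simpa using hU.apply k l
  let A : Matrix (Fin n) (Fin 2) ℝ :=
    Matrix.of fun i a => ![h * (1 : Matrix (Fin n) (Fin n) ℝ) i l,
      - h * (1 : Matrix (Fin n) (Fin n) ℝ) i k] a
  let C : Matrix (Fin 2) (Fin n) ℝ := Matrix.of fun a j => ![U k j, U l j] a
  have hAC : h • (rotMat k l * U) = A * C := by
    ext i j
    simp only [rotMat, Matrix.sub_mul, Matrix.smul_apply, Matrix.sub_apply, Matrix.mul_apply,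
      Matrix.single_apply, Fin.sum_univ_two, A, C, Matrix.of_apply, Matrix.one_apply, smul_eq_mul]
    by_cases h1 : l = i <;> by_cases h2 : k = i <;> simp [h1, h2, eq_comm]
  rw [hAC, det_one_add_mul_comm, det_fin_two]
  have e (a b : Fin 2) : (C * A) a b =
      ![![h * U k l, - h * U k k], ![h * U l l, - h * U k l]] a b := by
    fin_cases a <;> fin_cases b <;>
      simp [Matrix.mul_apply, A, C, Matrix.one_apply, hs, mul_comm]
  simp only [Matrix.add_apply, e]
  simp
  ring

lemma minor_pos {n : ℕ} {U : Matrix (Fin n) (Fin n) ℝ} (hU : U.PosDef) {k l : Fin n}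
    (hkl : k ≠ l) : 0 < U k k * U l l - U k l ^ 2 := by
  have hs : U l k = U k l := by simpa using hU.1.apply k l
  have hinj : Function.Injective ![k, l] := by
    intro a b hab
    fin_cases a <;> fin_cases b <;> simp_all [eq_comm]
  have := (hU.submatrix hinj).det_pos
  rw [det_fin_two] at this
  simp [hs] at this
  nlinarith

/-! ### Calculus -/

lemma second_deriv_nonpos_s13 {g g' : ℝ → ℝ} {c : ℝ} (hg : ∀ᶠ t in 𝓝 0, HasDerivAt g (g' t) t)
    (hg' : HasDerivAt g' c 0) (hmax : IsLocalMax g 0) : c ≤ 0 := by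
  by_contra! hc
  have hd : deriv g =ᶠ[𝓝 0] g' := hg.mono fun t ht => ht.deriv
  have hdd : deriv (deriv g) 0 = c := by rw [hd.deriv_eq, hg'.deriv]
  have hmin : IsLocalMin g 0 := isLocalMin_of_deriv_deriv_pos (by rw [hdd]; exact hc)
    hmax.deriv_eq_zero hg.self_of_nhds.continuousAt
  have hconst : g =ᶠ[𝓝 0] fun _ => g 0 := by
    filter_upwards [hmin, hmax] with t h1 h2 using le_antisymm h2 h1
  have h0 : deriv g =ᶠ[𝓝 0] fun _ => 0 := by
    simpa using hconst.deriv
  have : deriv (deriv g) 0 = 0 := by rw [h0.deriv_eq]; simp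
  linarith

/-- The infinitesimal rotation `p ↦ p_k e_l - p_l e_k` acting on covectors. Applied to
`fderiv ℝ u x` it gives a vector tangent to the level set of `u` through `x`. -/
noncomputable def rot {n : ℕ} (k l : Fin n) :
    (EuclideanSpace ℝ (Fin n) →L[ℝ] ℝ) →L[ℝ] EuclideanSpace ℝ (Fin n) :=
  (ContinuousLinearMap.apply ℝ ℝ (EuclideanSpace.single k (1 : ℝ))).smulRight
      (EuclideanSpace.single l (1 : ℝ)) -
    (ContinuousLinearMap.apply ℝ ℝ (EuclideanSpace.single l (1 : ℝ))).smulRight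
      (EuclideanSpace.single k (1 : ℝ))

lemma rot_apply {n : ℕ} (k l : Fin n) (p : EuclideanSpace ℝ (Fin n) →L[ℝ] ℝ) :
    rot k l p = p (EuclideanSpace.single k 1) • EuclideanSpace.single l (1 : ℝ) -
      p (EuclideanSpace.single l 1) • EuclideanSpace.single k (1 : ℝ) := by
  simp [rot]

section calculus

variable {E : Type*} [NormedAddCommGroup E] [NormedSpace ℝ E] {u : E → ℝ}

lemma hasFDerivAt_fun {x : E} (hx : ContDiffAt ℝ 3 u x) :
    HasFDerivAt u (fderiv ℝ u x) x :=
  (hx.differentiableAt (by norm_num)).hasFDerivAt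

lemma contDiffAt_fderiv {x : E} (hx : ContDiffAt ℝ 3 u x) :
    ContDiffAt ℝ 2 (fderiv ℝ u) x := hx.fderiv_right (by norm_num)

lemma contDiffAt_fderiv_two {x : E} (hx : ContDiffAt ℝ 3 u x) :
    ContDiffAt ℝ 1 (fderiv ℝ (fderiv ℝ u)) x :=
  (contDiffAt_fderiv hx).fderiv_right (by norm_num)

lemma hasFDerivAt_grad {x : E} (hx : ContDiffAt ℝ 3 u x) :
    HasFDerivAt (fderiv ℝ u) (fderiv ℝ (fderiv ℝ u) x) x :=
  ((contDiffAt_fderiv hx).differentiableAt (by norm_num)).hasFDerivAt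

lemma hasFDerivAt_hess {x : E} (hx : ContDiffAt ℝ 3 u x) :
    HasFDerivAt (fderiv ℝ (fderiv ℝ u)) (fderiv ℝ (fderiv ℝ (fderiv ℝ u)) x) x :=
  ((contDiffAt_fderiv_two hx).differentiableAt (by norm_num)).hasFDerivAt

lemma hess_symm {x : E} (hx : ContDiffAt ℝ 3 u x) (v w : E) :
    fderiv ℝ (fderiv ℝ u) x v w = fderiv ℝ (fderiv ℝ u) x w v :=
  (hx.isSymmSndFDerivAt (by simp; norm_num)) v w

lemma third_symm_left {x : E} (hx : ContDiffAt ℝ 3 u x) (v w : E) :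
    fderiv ℝ (fderiv ℝ (fderiv ℝ u)) x v w = fderiv ℝ (fderiv ℝ (fderiv ℝ u)) x w v :=
  ((contDiffAt_fderiv hx).isSymmSndFDerivAt (by simp)) v w

lemma third_symm_right {x : E} (hx : ContDiffAt ℝ 3 u x) (z v w : E) :
    fderiv ℝ (fderiv ℝ (fderiv ℝ u)) x z v w = fderiv ℝ (fderiv ℝ (fderiv ℝ u)) x z w v := by
  have h1 (v w : E) : HasFDerivAt (fun y => fderiv ℝ (fderiv ℝ u) y v w)
      ((ContinuousLinearMap.apply ℝ ℝ w).comp ((ContinuousLinearMap.apply ℝ (E →L[ℝ] ℝ) v).comp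
        (fderiv ℝ (fderiv ℝ (fderiv ℝ u)) x))) x :=
    HasFDerivAt.comp (g := ContinuousLinearMap.apply ℝ ℝ w) x
      (ContinuousLinearMap.hasFDerivAt _)
      (HasFDerivAt.comp (g := ContinuousLinearMap.apply ℝ (E →L[ℝ] ℝ) v) x
        (ContinuousLinearMap.hasFDerivAt _) (hasFDerivAt_hess hx))
  have h2 : (fun y => fderiv ℝ (fderiv ℝ u) y v w) =ᶠ[𝓝 x]
      fun y => fderiv ℝ (fderiv ℝ u) y w v := by
    filter_upwards [hx.eventually (by simp)] with y hy using hess_symm hy v w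
  have h3 := ((h1 v w).congr_of_eventuallyEq h2.symm).unique (h1 w v)
  simpa using congrArg (fun L => L z) h3

/-- Second order Taylor expansion along a segment on which the second derivative oscillates by at
most `η` (the constant is not optimal). -/
lemma taylor_one_side {x v : E} {h η : ℝ} (hh : 0 ≤ h)
    (hC : ∀ t ∈ Set.Icc 0 h, ContDiffAt ℝ 3 u (x + t • v))
    (hη : ∀ t ∈ Set.Icc 0 h,
      ‖fderiv ℝ (fderiv ℝ u) (x + t • v) - fderiv ℝ (fderiv ℝ u) x‖ ≤ η) :
    |u (x + h • v) - u x - h * fderiv ℝ u x v - h ^ 2 / 2 * fderiv ℝ (fderiv ℝ u) x v v| ≤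
      η * ‖v‖ ^ 2 * h ^ 2 := by
  have hline (t : ℝ) : HasDerivAt (fun t : ℝ => x + t • v) v t := by
    simpa using ((hasDerivAt_id t).smul_const v).const_add x
  have hη0 : 0 ≤ η * ‖v‖ ^ 2 :=
    mul_nonneg (le_trans (by positivity) (hη 0 ⟨le_rfl, hh⟩)) (by positivity)
  let R' : ℝ → ℝ := fun t => fderiv ℝ u (x + t • v) v - fderiv ℝ u x v
    - t * fderiv ℝ (fderiv ℝ u) x v v
  have hR' : ∀ t ∈ Set.Icc 0 h, |R' t| ≤ η * ‖v‖ ^ 2 * h := by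
    intro t ht
    have hd : ∀ s ∈ Set.Icc 0 h, HasDerivWithinAt R'
        (fderiv ℝ (fderiv ℝ u) (x + s • v) v v - fderiv ℝ (fderiv ℝ u) x v v) (Set.Icc 0 h) s := by
      intro s hs
      have h1 := (hasFDerivAt_grad (hC s hs)).comp_hasDerivAt s (hline s)
      have h2 := (h1.clm_apply (hasDerivAt_const s v)).sub_const (fderiv ℝ u x v)
      have h3 := h2.sub ((hasDerivAt_id s).mul_const (fderiv ℝ (fderiv ℝ u) x v v))
      exact (HasDerivAt.congr_deriv (f := R') h3 (by simp)).hasDerivWithinAt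
    have hb : ∀ s ∈ Set.Ico 0 h,
        ‖fderiv ℝ (fderiv ℝ u) (x + s • v) v v - fderiv ℝ (fderiv ℝ u) x v v‖ ≤
          η * ‖v‖ ^ 2 := by
      intro s hs
      have h1 := hη s ⟨hs.1, hs.2.le⟩
      have h2 := (fderiv ℝ (fderiv ℝ u) (x + s • v) - fderiv ℝ (fderiv ℝ u) x).le_opNorm₂ v v
      calc _ ≤ _ := by simpa using h2
        _ ≤ η * ‖v‖ * ‖v‖ := by gcongr
        _ = _ := by ring
    have := norm_image_sub_le_of_norm_deriv_le_segment' hd hb t ht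
    have h0 : R' 0 = 0 := by simp [R']
    rw [h0, sub_zero, sub_zero, Real.norm_eq_abs] at this
    exact this.trans (mul_le_mul_of_nonneg_left ht.2 hη0)
  let R : ℝ → ℝ := fun t => u (x + t • v) - t * fderiv ℝ u x v
    - t ^ 2 / 2 * fderiv ℝ (fderiv ℝ u) x v v
  have hd : ∀ s ∈ Set.Icc 0 h, HasDerivWithinAt R (R' s) (Set.Icc 0 h) s := by
    intro s hs
    have h1 := (hasFDerivAt_fun (hC s hs)).comp_hasDerivAt s (hline s)
    have h2 := h1.sub ((hasDerivAt_id s).mul_const (fderiv ℝ u x v))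
    have h3 := h2.sub ((((hasDerivAt_id s).pow 2).div_const 2).mul_const
      (fderiv ℝ (fderiv ℝ u) x v v))
    exact (HasDerivAt.congr_deriv (f := R) h3 (by simp [R'])).hasDerivWithinAt
  have := norm_image_sub_le_of_norm_deriv_le_segment' hd
    (fun s hs => hR' s ⟨hs.1, hs.2.le⟩) h ⟨hh, le_rfl⟩
  simp only [R, Real.norm_eq_abs, zero_smul, add_zero, sub_zero, zero_mul] at this
  calc _ = _ := by congr 1; ring
    _ ≤ _ := this
    _ = _ := by ring

lemma second_difference_error {x v : E} {h η : ℝ} (hh : 0 ≤ h)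
    (hC : ∀ t : ℝ, |t| ≤ h → ContDiffAt ℝ 3 u (x + t • v))
    (hη : ∀ t : ℝ, |t| ≤ h →
      ‖fderiv ℝ (fderiv ℝ u) (x + t • v) - fderiv ℝ (fderiv ℝ u) x‖ ≤ η) :
    |u (x + h • v) + u (x + (-h) • v) - 2 * u x - h ^ 2 * fderiv ℝ (fderiv ℝ u) x v v| ≤
      2 * (η * ‖v‖ ^ 2 * h ^ 2) := by
  have h1 := taylor_one_side (x := x) (v := v) hh
    (fun t ht => hC t (abs_le.mpr ⟨by linarith [ht.1], ht.2⟩))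
    (fun t ht => hη t (abs_le.mpr ⟨by linarith [ht.1], ht.2⟩))
  have h2 := taylor_one_side (x := x) (v := -v) hh
    (fun t ht => by
      simpa using hC (-t) (by rw [abs_neg]; exact abs_le.mpr ⟨by linarith [ht.1], ht.2⟩))
    (fun t ht => by
      simpa using hη (-t) (by rw [abs_neg]; exact abs_le.mpr ⟨by linarith [ht.1], ht.2⟩))
  simp only [smul_neg, map_neg, _root_.neg_apply, neg_neg, norm_neg] at h2
  rw [neg_smul]
  rw [abs_le] at *
  constructor <;> linarith [h1.1, h1.2, h2.1, h2.2]

/-- Second derivative at `t = 0` of `u (y + s • J (Du y))` along the line `y = x + t • w`. It is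
written with a first derivative `g'` near `0`, as used in `second_deriv_nonpos`. The last summand
is the contribution of the curvature of the displaced line. -/
lemma line_second_deriv (J : (E →L[ℝ] ℝ) →L[ℝ] E) (s : ℝ) (x w : E)
    (hx : ContDiffAt ℝ 3 u x) (hy : ContDiffAt ℝ 3 u (x + s • J (fderiv ℝ u x))) :
    ∃ g' : ℝ → ℝ,
      (∀ᶠ t : ℝ in 𝓝 0, HasDerivAt
        (fun t : ℝ => u (x + t • w + s • J (fderiv ℝ u (x + t • w)))) (g' t) t) ∧
      HasDerivAt g'
        (fderiv ℝ (fderiv ℝ u) (x + s • J (fderiv ℝ u x))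
          (w + s • J (fderiv ℝ (fderiv ℝ u) x w)) (w + s • J (fderiv ℝ (fderiv ℝ u) x w)) +
        fderiv ℝ u (x + s • J (fderiv ℝ u x))
          (s • J (fderiv ℝ (fderiv ℝ (fderiv ℝ u)) x w w))) 0 := by
  have hline (t : ℝ) : HasDerivAt (fun t : ℝ => x + t • w) w t := by
    simpa using ((hasDerivAt_id t).smul_const w).const_add x
  let c : ℝ → E := fun t => x + t • w + s • J (fderiv ℝ u (x + t • w))
  let c' : ℝ → E := fun t => w + s • J (fderiv ℝ (fderiv ℝ u) (x + t • w) w)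
  have hc (t : ℝ) (ht : ContDiffAt ℝ 3 u (x + t • w)) : HasDerivAt c (c' t) t := by
    have h1 := (hasFDerivAt_grad ht).comp_hasDerivAt t (hline t)
    exact (hline t).add ((J.hasFDerivAt.comp_hasDerivAt t h1).const_smul s)
  have hx0 : x + (0 : ℝ) • w = x := by simp
  have hc0 : c 0 = x + s • J (fderiv ℝ u x) := by simp [c]
  have hev : ∀ᶠ t : ℝ in 𝓝 0, ContDiffAt ℝ 3 u (x + t • w) := by
    have hcont : Tendsto (fun t : ℝ => x + t • w) (𝓝 0) (𝓝 x) := by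
      simpa using (hline 0).continuousAt.tendsto
    exact hcont.eventually (hx.eventually (by simp))
  have hcd0 := hc 0 (by rwa [hx0])
  have hev2 : ∀ᶠ t : ℝ in 𝓝 0, ContDiffAt ℝ 3 u (c t) := by
    have hcont := hcd0.continuousAt.tendsto
    rw [hc0] at hcont
    exact hcont.eventually (hy.eventually (by simp))
  refine ⟨fun t => fderiv ℝ u (c t) (c' t), ?_, ?_⟩
  · filter_upwards [hev, hev2] with t h1 h2
    exact (hasFDerivAt_fun h2).comp_hasDerivAt t (hc t h1)
  · have h1 := HasFDerivAt.comp_hasDerivAt (l := fderiv ℝ (fderiv ℝ u))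
      (l' := fderiv ℝ (fderiv ℝ (fderiv ℝ u)) (x + (0 : ℝ) • w)) 0
      (hasFDerivAt_hess (by rwa [hx0])) (hline 0)
    have h2 : HasDerivAt c' (s • J (fderiv ℝ (fderiv ℝ (fderiv ℝ u)) x w w)) 0 := by
      have h3 := h1.clm_apply (hasDerivAt_const (0 : ℝ) w)
      simpa [c', hx0] using ((J.hasFDerivAt.comp_hasDerivAt 0 h3).const_smul s).const_add w
    have h4 := (hasFDerivAt_grad (x := c 0) (by rwa [hc0])).comp_hasDerivAt 0 hcd0
    have h5 := h4.clm_apply h2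
    simpa [hc0, c'] using h5

end calculus

/-! ### The linearized operator -/

lemma hess_apply {n : ℕ} {u : EuclideanSpace ℝ (Fin n) → ℝ} {y : EuclideanSpace ℝ (Fin n)}
    (hy : ContDiffAt ℝ 3 u y) (i j : Fin n) :
    hess u y i j = fderiv ℝ (fderiv ℝ u) y (EuclideanSpace.single i 1)
      (EuclideanSpace.single j 1) := by
  have h := HasFDerivAt.comp
    (g := ContinuousLinearMap.apply ℝ ℝ (EuclideanSpace.single j (1 : ℝ))) y
    (ContinuousLinearMap.hasFDerivAt _) (hasFDerivAt_grad hy)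
  have h2 : pd j u = (ContinuousLinearMap.apply ℝ ℝ (EuclideanSpace.single j (1 : ℝ))) ∘
      fderiv ℝ u := by
    ext z; simp [pd]
  simp only [hess, Matrix.of_apply]
  rw [pd, h2, h.fderiv]
  simp

lemma sum_smul_single {n : ℕ} (w : EuclideanSpace ℝ (Fin n)) :
    w = ∑ i, w i • EuclideanSpace.single i (1 : ℝ) := by
  ext j
  simp [Finset.sum_apply, Pi.single_apply]

lemma hess_bilin {n : ℕ} {u : EuclideanSpace ℝ (Fin n) → ℝ} {y : EuclideanSpace ℝ (Fin n)}
    (hy : ContDiffAt ℝ 3 u y) (v w : EuclideanSpace ℝ (Fin n)) :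
    fderiv ℝ (fderiv ℝ u) y v w = ∑ i, ∑ j, v i * hess u y i j * w j := by
  conv_lhs => rw [sum_smul_single v, sum_smul_single w]
  simp only [map_sum, map_smul, _root_.sum_apply, _root_.smul_apply, smul_eq_mul, hess_apply hy,
    Finset.mul_sum]
  rw [Finset.sum_comm]
  refine Finset.sum_congr rfl fun i _ => Finset.sum_congr rfl fun j _ => by ring

/-- The `a`-th column of a square matrix, as a point of Euclidean space. -/
noncomputable def colVec {n : ℕ} (W : Matrix (Fin n) (Fin n) ℝ) (a : Fin n) :
    EuclideanSpace ℝ (Fin n) :=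
  WithLp.toLp 2 fun i => W i a

lemma sum_hess_colVec {n : ℕ} {u : EuclideanSpace ℝ (Fin n) → ℝ} {y : EuclideanSpace ℝ (Fin n)}
    (hy : ContDiffAt ℝ 3 u y) (W : Matrix (Fin n) (Fin n) ℝ) :
    ∑ a, fderiv ℝ (fderiv ℝ u) y (colVec W a) (colVec W a) = (Wᵀ * hess u y * W).trace := by
  simp only [hess_bilin hy, colVec, Matrix.trace, Matrix.diag_apply, Matrix.mul_apply,
    Matrix.transpose_apply, Finset.sum_mul]
  exact Finset.sum_congr rfl fun a _ => Finset.sum_comm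

lemma colVec_rot {n : ℕ} {u : EuclideanSpace ℝ (Fin n) → ℝ} {x : EuclideanSpace ℝ (Fin n)}
    (hx : ContDiffAt ℝ 3 u x) (W : Matrix (Fin n) (Fin n) ℝ) (k l a : Fin n) (s : ℝ) :
    colVec W a + s • rot k l (fderiv ℝ (fderiv ℝ u) x (colVec W a)) =
      colVec ((1 + s • (rotMat k l * hess u x)) * W) a := by
  have hk (k : Fin n) : fderiv ℝ (fderiv ℝ u) x (colVec W a) (EuclideanSpace.single k 1) =
      (hess u x * W) k a := by
    rw [hess_symm hx, hess_bilin hx]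
    simp [Matrix.mul_apply, colVec]
  ext i
  rw [rot_apply, hk, hk, Matrix.add_mul, Matrix.one_mul, Matrix.smul_mul, Matrix.mul_assoc]
  simp only [colVec, rotMat, Matrix.sub_mul, PiLp.add_apply, PiLp.smul_apply, PiLp.sub_apply,
    Matrix.add_apply, Matrix.smul_apply, Matrix.sub_apply, smul_eq_mul]
  have hs (p q : Fin n) (M : Matrix (Fin n) (Fin n) ℝ) :
      (Matrix.single p q (1 : ℝ) * M) i a = M q a * EuclideanSpace.single p (1 : ℝ) i := by
    rw [Matrix.mul_apply]
    by_cases hpi : p = i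
    · subst hpi; simp [Matrix.single_apply]
    · simp [hpi, Ne.symm hpi]
  rw [hs, hs]

lemma sum_norm_colVec {n : ℕ} {U W : Matrix (Fin n) (Fin n) ℝ} (hU : U.det = 1)
    (hW : Wᵀ * U * W = 1) : ∑ a, ‖colVec W a‖ ^ 2 = U.adjugate.trace := by
  have h1 : W * (Wᵀ * U) = 1 := mul_eq_one_comm.mp hW
  have h2 : W * Wᵀ = U.adjugate := by
    calc W * Wᵀ = W * Wᵀ * (U * U.adjugate) := by rw [mul_adjugate, hU]; simp
      _ = W * (Wᵀ * U) * U.adjugate := by simp only [Matrix.mul_assoc]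
      _ = _ := by rw [h1, Matrix.one_mul]
  rw [← h2]
  simp only [EuclideanSpace.norm_sq_eq, colVec, Matrix.trace, Matrix.diag_apply, Matrix.mul_apply,
    Matrix.transpose_apply, Real.norm_eq_abs, sq_abs]
  rw [Finset.sum_comm]
  simp only [pow_two]

section solution

variable {n : ℕ} {Ω : Set (EuclideanSpace ℝ (Fin n))} {u : EuclideanSpace ℝ (Fin n) → ℝ}

/-- Each component of `Du` is annihilated by the linearized operator at `x`. The function
`y ↦ tr ((D²u(x))⁻¹ D²u(y))` is at least `n` on `Ω`, with equality at `x`; its differential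
therefore vanishes at `x`, and symmetry of the third derivative gives the claim. -/
lemma linearized_gradient (hΩo : IsOpen Ω) (hC : ∀ y ∈ Ω, ContDiffAt ℝ 3 u y)
    (hpos : ∀ x ∈ Ω, (hess u x).PosDef) (hMA : ∀ x ∈ Ω, (hess u x).det = 1)
    {x : EuclideanSpace ℝ (Fin n)} (hx : x ∈ Ω) {W : Matrix (Fin n) (Fin n) ℝ}
    (hW : Wᵀ * hess u x * W = 1) :
    ∑ a, fderiv ℝ (fderiv ℝ (fderiv ℝ u)) x (colVec W a) (colVec W a) = 0 := by
  have hmin : IsLocalMin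
      (fun y => ∑ a, fderiv ℝ (fderiv ℝ u) y (colVec W a) (colVec W a)) x := by
    filter_upwards [hΩo.mem_nhds hx] with y hy
    simp only [sum_hess_colVec (hC x hx), sum_hess_colVec (hC y hy), hW]
    have := trace_congr_ge (B := 1) (hpos y hy) (hMA x hx) (hMA y hy) hW (by simp)
    simpa using this
  have hd (v : EuclideanSpace ℝ (Fin n)) : HasFDerivAt (fun y => fderiv ℝ (fderiv ℝ u) y v v)
      ((ContinuousLinearMap.apply ℝ ℝ v).comp ((ContinuousLinearMap.apply ℝ
        (EuclideanSpace ℝ (Fin n) →L[ℝ] ℝ) v).comp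
        (fderiv ℝ (fderiv ℝ (fderiv ℝ u)) x))) x :=
    HasFDerivAt.comp (g := ContinuousLinearMap.apply ℝ ℝ v) x
      (ContinuousLinearMap.hasFDerivAt _)
      (HasFDerivAt.comp
        (g := ContinuousLinearMap.apply ℝ (EuclideanSpace ℝ (Fin n) →L[ℝ] ℝ) v) x
        (ContinuousLinearMap.hasFDerivAt _) (hasFDerivAt_hess (hC x hx)))
  have hz := hmin.hasFDerivAt_eq_zero
    (HasFDerivAt.fun_sum fun a _ => hd (colVec W a))
  ext z
  have := congrArg (fun L => L z) hz
  simp only [_root_.sum_apply, ContinuousLinearMap.comp_apply,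
    ContinuousLinearMap.apply_apply, _root_.zero_apply] at this ⊢
  rw [← this]
  refine Finset.sum_congr rfl fun a _ => ?_
  rw [third_symm_right (hC x hx), third_symm_left (hC x hx)]

/-- The linearized operator at `x`, applied to `y ↦ u (y + s • v_{kl}(y))`, is at least
`n + 2 log (1 + s² m_{kl})`; the terms with third derivatives cancel by `linearized_gradient`. -/
lemma sum_second_deriv_ge (hΩo : IsOpen Ω) (hC : ∀ y ∈ Ω, ContDiffAt ℝ 3 u y)
    (hpos : ∀ x ∈ Ω, (hess u x).PosDef) (hMA : ∀ x ∈ Ω, (hess u x).det = 1)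
    {x : EuclideanSpace ℝ (Fin n)} (hx : x ∈ Ω) {W : Matrix (Fin n) (Fin n) ℝ}
    (hW : Wᵀ * hess u x * W = 1) (k l : Fin n) (s : ℝ)
    (hy : x + s • rot k l (fderiv ℝ u x) ∈ Ω) :
    (n : ℝ) + 2 * Real.log (1 + s ^ 2 * (hess u x k k * hess u x l l - hess u x k l ^ 2)) ≤
      ∑ a, (fderiv ℝ (fderiv ℝ u) (x + s • rot k l (fderiv ℝ u x))
          (colVec W a + s • rot k l (fderiv ℝ (fderiv ℝ u) x (colVec W a)))
          (colVec W a + s • rot k l (fderiv ℝ (fderiv ℝ u) x (colVec W a))) +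
        fderiv ℝ u (x + s • rot k l (fderiv ℝ u x))
          (s • rot k l (fderiv ℝ (fderiv ℝ (fderiv ℝ u)) x (colVec W a) (colVec W a)))) := by
  have hm : 0 ≤ hess u x k k * hess u x l l - hess u x k l ^ 2 := by
    by_cases h : k = l
    · subst h; apply le_of_eq; ring
    · exact (minor_pos (hpos x hx) h).le
  have hdet := det_one_add_rot (hess u x) (hpos x hx).1 k l s
  rw [Finset.sum_add_distrib, ← map_sum, ← Finset.smul_sum, ← map_sum,
    linearized_gradient hΩo hC hpos hMA hx hW, map_zero, smul_zero, map_zero, add_zero]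
  simp only [colVec_rot (hC x hx)]
  rw [sum_hess_colVec (hC _ hy), ← hdet]
  refine trace_congr_ge (hpos _ hy) (hMA x hx) (hMA _ hy) hW ?_
  rw [hdet]
  positivity

/-- What the second derivative test yields, after summation over the columns of `W`, at an interior
local maximum of the second-difference approximation corrected by `ε ‖y - x₁‖²`. -/
lemma max_point_inequality (hΩo : IsOpen Ω) (hC : ∀ y ∈ Ω, ContDiffAt ℝ 3 u y)
    (hpos : ∀ x ∈ Ω, (hess u x).PosDef) (hMA : ∀ x ∈ Ω, (hess u x).det = 1)
    {x x₁ : EuclideanSpace ℝ (Fin n)} (hx : x ∈ Ω) {h ε : ℝ}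
    (hp : ∀ k l, x + h • rot k l (fderiv ℝ u x) ∈ Ω)
    (hm : ∀ k l, x + (-h) • rot k l (fderiv ℝ u x) ∈ Ω)
    (hmax : IsLocalMax (fun y => ∑ k, ∑ l, (u (y + h • rot k l (fderiv ℝ u y)) +
      u (y + (-h) • rot k l (fderiv ℝ u y)) - 2 * u y) - ε * ‖y - x₁‖ ^ 2) x) :
    ∑ k, ∑ l, 4 * Real.log (1 + h ^ 2 * (hess u x k k * hess u x l l - hess u x k l ^ 2)) ≤
      2 * ε * (hess u x).adjugate.trace := by
  obtain ⟨W, hW⟩ := exists_normalizing (hpos x hx)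
  -- the second derivative of `t ↦ u (y + s • rot k l (Du y))`, `y = x + t • w`, at `t = 0`
  let q : ℝ → Fin n → Fin n → EuclideanSpace ℝ (Fin n) → ℝ := fun s k l w =>
    fderiv ℝ (fderiv ℝ u) (x + s • rot k l (fderiv ℝ u x))
          (w + s • rot k l (fderiv ℝ (fderiv ℝ u) x w))
          (w + s • rot k l (fderiv ℝ (fderiv ℝ u) x w)) +
        fderiv ℝ u (x + s • rot k l (fderiv ℝ u x))
          (s • rot k l (fderiv ℝ (fderiv ℝ (fderiv ℝ u)) x w w))
  have hdir (w : EuclideanSpace ℝ (Fin n)) :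
      ∑ k, ∑ l, (q h k l w + q (-h) k l w - 2 * fderiv ℝ (fderiv ℝ u) x w w)
        - ε * (2 * ‖w‖ ^ 2) ≤ 0 := by
    choose gp hgp hgp' using fun k l =>
      line_second_deriv (rot k l) h x w (hC x hx) (hC _ (hp k l))
    choose gm hgm hgm' using fun k l =>
      line_second_deriv (rot k l) (-h) x w (hC x hx) (hC _ (hm k l))
    obtain ⟨g0, hg0, hg0'⟩ := line_second_deriv 0 0 x w (hC x hx) (by simpa using hC x hx)
    simp only [zero_smul, add_zero, map_zero] at hg0 hg0'
    have hline (t : ℝ) : HasDerivAt (fun t : ℝ => x + t • w - x₁) w t := by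
      simpa using (((hasDerivAt_id t).smul_const w).const_add x).sub_const x₁
    have hgN (t : ℝ) := (hline t).norm_sq
    have hgN' : HasDerivAt (fun t : ℝ => 2 * inner ℝ (x + t • w - x₁) w) (2 * ‖w‖ ^ 2) 0 := by
      have := ((hline 0).inner ℝ (hasDerivAt_const (0 : ℝ) w)).const_mul 2
      simpa using this
    refine second_deriv_nonpos_s13 (g := fun t : ℝ => ∑ k, ∑ l,
        (u (x + t • w + h • rot k l (fderiv ℝ u (x + t • w))) +
          u (x + t • w + (-h) • rot k l (fderiv ℝ u (x + t • w))) - 2 * u (x + t • w)) -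
        ε * ‖x + t • w - x₁‖ ^ 2)
      (g' := fun t => ∑ k, ∑ l, (gp k l t + gm k l t - 2 * g0 t) -
        ε * (2 * inner ℝ (x + t • w - x₁) w)) ?_ ?_ ?_
    · have e1 := eventually_all.mpr fun k => eventually_all.mpr fun l => hgp k l
      have e2 := eventually_all.mpr fun k => eventually_all.mpr fun l => hgm k l
      filter_upwards [e1, e2, hg0] with t h1 h2 h3
      exact (HasDerivAt.fun_sum fun k _ => HasDerivAt.fun_sum fun l _ =>
        ((h1 k l).fun_add (h2 k l)).fun_sub (h3.const_mul 2)).fun_sub ((hgN t).const_mul ε)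
    · exact (HasDerivAt.fun_sum fun k _ => HasDerivAt.fun_sum fun l _ =>
        ((hgp' k l).fun_add (hgm' k l)).fun_sub (hg0'.const_mul 2)).fun_sub (hgN'.const_mul ε)
    · have hcont : Tendsto (fun t : ℝ => x + t • w) (𝓝 0) (𝓝 x) := by
        have : Continuous fun t : ℝ => x + t • w := by fun_prop
        simpa using this.tendsto 0
      have := hcont.eventually hmax
      simpa [IsLocalMax, IsMaxFilter] using this
  have hsum : ∑ a, (∑ k, ∑ l, (q h k l (colVec W a) + q (-h) k l (colVec W a)
      - 2 * fderiv ℝ (fderiv ℝ u) x (colVec W a) (colVec W a))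
        - ε * (2 * ‖colVec W a‖ ^ 2)) ≤ 0 :=
    Finset.sum_nonpos fun a _ => hdir _
  have h0 : ∑ a, fderiv ℝ (fderiv ℝ u) x (colVec W a) (colVec W a) = n := by
    rw [sum_hess_colVec (hC x hx), hW]; simp
  rw [Finset.sum_sub_distrib, ← Finset.mul_sum, ← Finset.mul_sum,
    sum_norm_colVec (hMA x hx) hW, Finset.sum_comm] at hsum
  have hkey : ∑ k, ∑ l, 4 * Real.log
      (1 + h ^ 2 * (hess u x k k * hess u x l l - hess u x k l ^ 2)) ≤
      ∑ k, ∑ a, ∑ l, (q h k l (colVec W a) + q (-h) k l (colVec W a)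
      - 2 * fderiv ℝ (fderiv ℝ u) x (colVec W a) (colVec W a)) := by
    refine Finset.sum_le_sum fun k _ => ?_
    rw [Finset.sum_comm]
    refine Finset.sum_le_sum fun l _ => ?_
    rw [Finset.sum_sub_distrib, Finset.sum_add_distrib, ← Finset.mul_sum, h0]
    have h1 := sum_second_deriv_ge hΩo hC hpos hMA hx hW k l h (hp k l)
    have h2 := sum_second_deriv_ge hΩo hC hpos hMA hx hW k l (-h) (hm k l)
    rw [neg_sq] at h2
    simp only [q]
    linarith
  linarith

end solution

/-- The identity `|p|² I - p pᵀ = ½ ∑ v_{kl} v_{kl}ᵀ`, contracted with the Hessian. -/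
lemma two_mul_curvature_eq {n : ℕ} {u : EuclideanSpace ℝ (Fin n) → ℝ}
    {x : EuclideanSpace ℝ (Fin n)} (hx : ContDiffAt ℝ 3 u x) :
    ∑ k, ∑ l, fderiv ℝ (fderiv ℝ u) x (rot k l (fderiv ℝ u x)) (rot k l (fderiv ℝ u x)) =
      2 * ∑ k, ∑ l, bMat u x k l * pd k u x * pd l u x := by
  have h1 (k l : Fin n) :
      fderiv ℝ (fderiv ℝ u) x (rot k l (fderiv ℝ u x)) (rot k l (fderiv ℝ u x)) =
      pd k u x ^ 2 * hess u x l l + pd l u x ^ 2 * hess u x k k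
        - 2 * (hess u x k l * pd k u x * pd l u x) := by
    have hs : hess u x l k = hess u x k l := by
      rw [hess_apply hx, hess_apply hx, hess_symm hx]
    rw [rot_apply]
    simp only [map_sub, map_smul, _root_.sub_apply, _root_.smul_apply, smul_eq_mul,
      ← hess_apply hx, hs]
    simp only [pd]
    ring
  have h2 : ∑ k, ∑ l, bMat u x k l * pd k u x * pd l u x =
      (∑ k, pd k u x ^ 2) * (∑ l, hess u x l l) -
        ∑ k, ∑ l, hess u x k l * pd k u x * pd l u x := by
    simp only [bMat, Matrix.sub_apply, Matrix.smul_apply, Matrix.one_apply, smul_eq_mul, sub_mul,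
      Finset.sum_sub_distrib, Matrix.trace, Matrix.diag_apply]
    congr 1
    simp only [mul_ite, mul_one, mul_zero, ite_mul, zero_mul, Finset.sum_ite_eq, Finset.mem_univ,
      if_true]
    rw [Finset.sum_mul]
    exact Finset.sum_congr rfl fun k _ => by ring
  simp only [h1, Finset.sum_sub_distrib, Finset.sum_add_distrib, ← Finset.mul_sum, h2]
  rw [Finset.sum_comm (f := fun k l => pd l u x ^ 2 * hess u x k k)]
  simp only [← Finset.mul_sum, ← Finset.sum_mul]
  ring

lemma norm_rot_le {n : ℕ} (k l : Fin n) (p : EuclideanSpace ℝ (Fin n) →L[ℝ] ℝ) :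
    ‖rot k l p‖ ≤ 2 * ‖p‖ := by
  have h (k : Fin n) : ‖p (EuclideanSpace.single k 1)‖ ≤ ‖p‖ := by
    simpa using p.le_opNorm (EuclideanSpace.single k 1)
  rw [rot_apply]
  refine (norm_sub_le _ _).trans ?_
  rw [norm_smul, norm_smul]
  simp only [PiLp.norm_single, norm_one, mul_one]
  linarith [h k, h l]

/-! ### Absence of interior maxima -/

lemma half_le_log_one_add {s : ℝ} (h0 : 0 ≤ s) (h1 : s ≤ 1) : s / 2 ≤ Real.log (1 + s) := by
  have h := Real.one_sub_inv_le_log_of_pos (show 0 < 1 + s by linarith)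
  refine le_trans ?_ h
  rw [show 1 - (1 + s)⁻¹ = s / (1 + s) by field_simp; ring]
  gcongr
  linarith

lemma continuousOn_hess_s13 {n : ℕ} {u : EuclideanSpace ℝ (Fin n) → ℝ}
    {K : Set (EuclideanSpace ℝ (Fin n))} (hC : ∀ y ∈ K, ContDiffAt ℝ 3 u y) :
    ContinuousOn (hess u) K := by
  refine continuousOn_pi.mpr fun i => continuousOn_pi.mpr fun j => ?_
  have h : ContinuousOn (fderiv ℝ (fderiv ℝ u)) K := fun y hy =>
    (hasFDerivAt_hess (hC y hy)).continuousAt.continuousWithinAt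
  exact ((h.clm_apply continuousOn_const).clm_apply continuousOn_const).congr
    fun y hy => hess_apply (hC y hy) i j

/-- The function `2 φ`, in the form of `two_mul_curvature_eq`, has no maximum point in `Ω`. -/
lemma no_interior_max_s13 {n : ℕ} (hn : 2 ≤ n) {Ω : Set (EuclideanSpace ℝ (Fin n))}
    {u : EuclideanSpace ℝ (Fin n) → ℝ}
    (hΩo : IsOpen Ω) (hC : ∀ y ∈ Ω, ContDiffAt ℝ 3 u y)
    (hpos : ∀ x ∈ Ω, (hess u x).PosDef) (hMA : ∀ x ∈ Ω, (hess u x).det = 1)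
    {x₁ : EuclideanSpace ℝ (Fin n)} (hx₁ : x₁ ∈ Ω)
    (hmax : ∀ y ∈ Ω,
      ∑ k, ∑ l, fderiv ℝ (fderiv ℝ u) y (rot k l (fderiv ℝ u y)) (rot k l (fderiv ℝ u y)) ≤
      ∑ k, ∑ l, fderiv ℝ (fderiv ℝ u) x₁ (rot k l (fderiv ℝ u x₁)) (rot k l (fderiv ℝ u x₁))) :
    False := by
  obtain ⟨R, hR, hRΩ⟩ := Metric.nhds_basis_closedBall.mem_iff.mp (hΩo.mem_nhds hx₁)
  set K := Metric.closedBall x₁ R with hK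
  have hKc : IsCompact K := isCompact_closedBall x₁ R
  have hx₁K : x₁ ∈ K := Metric.mem_closedBall_self hR.le
  have hCK : ∀ y ∈ K, ContDiffAt ℝ 3 u y := fun y hy => hC y (hRΩ hy)
  set r := R / 2 with hr
  have hr0 : 0 < r := by positivity
  have hBK : Metric.closedBall x₁ r ⊆ K := Metric.closedBall_subset_closedBall (by linarith)
  have cu : ContinuousOn u K := fun y hy =>
    (hasFDerivAt_fun (hCK y hy)).continuousAt.continuousWithinAt
  have cD1 : ContinuousOn (fderiv ℝ u) K := fun y hy =>
    (hasFDerivAt_grad (hCK y hy)).continuousAt.continuousWithinAt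
  have cD2 : ContinuousOn (fderiv ℝ (fderiv ℝ u)) K := fun y hy =>
    (hasFDerivAt_hess (hCK y hy)).continuousAt.continuousWithinAt
  have cH : ContinuousOn (hess u) K := continuousOn_hess_s13 hCK
  have cHe (i j : Fin n) : ContinuousOn (fun y => hess u y i j) K :=
    continuousOn_pi.mp (continuousOn_pi.mp cH i) j
  -- bounds on `K` for the displacement vectors and for the trace of the inverse Hessian
  obtain ⟨V₀, hV₀⟩ := hKc.exists_bound_of_continuousOn cD1
  have hV₀0 : 0 ≤ V₀ := (norm_nonneg _).trans (hV₀ x₁ hx₁K)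
  set V := 2 * V₀ + 1 with hVdef
  have hV0 : 0 < V := by positivity
  have hV : ∀ y ∈ K, ∀ k l, ‖rot k l (fderiv ℝ u y)‖ ≤ V := fun y hy k l =>
    (norm_rot_le k l _).trans (by linarith [hV₀ y hy])
  obtain ⟨T₀, hT₀⟩ := hKc.exists_bound_of_continuousOn
    ((continuous_id.matrix_adjugate.matrix_trace).comp_continuousOn cH)
  have hT₀0 : 0 ≤ T₀ := (norm_nonneg _).trans (hT₀ x₁ hx₁K)
  set T := T₀ + 1 with hTdef
  have hT0 : 0 < T := by positivity
  have hT : ∀ y ∈ K, (hess u y).adjugate.trace ≤ T := fun y hy =>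
    (le_abs_self _).trans ((hT₀ y hy).trans (by linarith))
  -- a positive lower bound on `K` for one principal `2 × 2` minor of the Hessian
  let i₀ : Fin n := ⟨0, by omega⟩
  let i₁ : Fin n := ⟨1, by omega⟩
  have hi : i₀ ≠ i₁ := by simp [i₀, i₁]
  obtain ⟨z, hzK, hz⟩ := hKc.exists_isMinOn ⟨x₁, hx₁K⟩
    (((cHe i₀ i₀).mul (cHe i₁ i₁)).sub ((cHe i₀ i₁).pow 2))
  set m₀ := hess u z i₀ i₀ * hess u z i₁ i₁ - hess u z i₀ i₁ ^ 2 with hm₀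
  have hm₀0 : 0 < m₀ := minor_pos (hpos z (hRΩ hzK)) hi
  have hm₀le : ∀ y ∈ K, m₀ ≤ hess u y i₀ i₀ * hess u y i₁ i₁ - hess u y i₀ i₁ ^ 2 :=
    fun y hy => hz hy
  set ε := m₀ / (2 * T) with hε
  have hε0 : 0 < ε := by positivity
  have hn0 : (0 : ℝ) < n := by exact_mod_cast (by omega : 0 < n)
  set η := ε * r ^ 2 / (8 * n ^ 2 * V ^ 2) with hη
  have hη0 : 0 < η := by positivity
  have hUC : UniformContinuousOn (fderiv ℝ (fderiv ℝ u)) K :=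
    hKc.uniformContinuousOn_of_continuous cD2
  have hUC' : ∀ e > 0, ∃ d > 0, ∀ a ∈ K, ∀ b ∈ K, dist a b < d →
      ‖fderiv ℝ (fderiv ℝ u) a - fderiv ℝ (fderiv ℝ u) b‖ < e := by
    intro e he
    obtain ⟨d, hd, H⟩ :=
      (Metric.uniformContinuousOn_iff (f := fderiv ℝ (fderiv ℝ u)) (s := K)).mp hUC e he
    refine ⟨d, hd, fun a ha b hb hab => ?_⟩
    exact (dist_eq_norm (fderiv ℝ (fderiv ℝ u) a) (fderiv ℝ (fderiv ℝ u) b)).symm.trans_lt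
      (H a ha b hb hab)
  obtain ⟨ρ, hρ, hρη⟩ := hUC' η hη0
  obtain ⟨h, hh0, hhr, hhρ, hhm⟩ : ∃ h : ℝ, 0 < h ∧ h * V < r ∧ h * V < ρ ∧ h ^ 2 * m₀ < 1 := by
    have e1 : Tendsto (fun h : ℝ => h * V) (𝓝[>] 0) (𝓝 0) := by
      have : Continuous fun h : ℝ => h * V := by fun_prop
      simpa using (this.tendsto 0).mono_left nhdsWithin_le_nhds
    have e2 : Tendsto (fun h : ℝ => h ^ 2 * m₀) (𝓝[>] 0) (𝓝 0) := by
      have : Continuous fun h : ℝ => h ^ 2 * m₀ := by fun_prop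
      simpa using (this.tendsto 0).mono_left nhdsWithin_le_nhds
    have e0 : ∀ᶠ h : ℝ in 𝓝[>] 0, 0 < h := self_mem_nhdsWithin
    exact (e0.and ((e1.eventually_lt_const hr0).and
      ((e1.eventually_lt_const hρ).and (e2.eventually_lt_const one_pos)))).exists
  have hdisp : ∀ y ∈ Metric.closedBall x₁ r, ∀ k l, ∀ t : ℝ, |t| ≤ h →
      ‖t • rot k l (fderiv ℝ u y)‖ ≤ h * V := fun y hy k l t ht => by
    rw [norm_smul, Real.norm_eq_abs]
    exact mul_le_mul ht (hV y (hBK hy) k l) (norm_nonneg _) hh0.le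
  have hstay : ∀ y ∈ Metric.closedBall x₁ r, ∀ k l, ∀ t : ℝ, |t| ≤ h →
      y + t • rot k l (fderiv ℝ u y) ∈ K := fun y hy k l t ht => by
    have h1 := hdisp y hy k l t ht
    rw [hK, mem_closedBall_iff_norm]
    rw [mem_closedBall_iff_norm] at hy
    calc ‖y + t • rot k l (fderiv ℝ u y) - x₁‖
        = ‖(y - x₁) + t • rot k l (fderiv ℝ u y)‖ := by congr 1; abel
      _ ≤ ‖y - x₁‖ + ‖t • rot k l (fderiv ℝ u y)‖ := norm_add_le _ _
      _ ≤ R := by linarith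
  have habs : |h| ≤ h := (abs_of_pos hh0).le
  have habs' : |-h| ≤ h := by rw [abs_neg]; exact habs
  let G : EuclideanSpace ℝ (Fin n) → ℝ := fun y => ∑ k, ∑ l,
    (u (y + h • rot k l (fderiv ℝ u y)) + u (y + (-h) • rot k l (fderiv ℝ u y)) - 2 * u y)
  let Φ : EuclideanSpace ℝ (Fin n) → ℝ := fun y => ∑ k, ∑ l,
    fderiv ℝ (fderiv ℝ u) y (rot k l (fderiv ℝ u y)) (rot k l (fderiv ℝ u y))
  have hGΦ : ∀ y ∈ Metric.closedBall x₁ r, |G y - h ^ 2 * Φ y| ≤ h ^ 2 * (ε * r ^ 2 / 4) := by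
    intro y hy
    have hterm (k l : Fin n) : |u (y + h • rot k l (fderiv ℝ u y)) +
        u (y + (-h) • rot k l (fderiv ℝ u y)) - 2 * u y -
        h ^ 2 * fderiv ℝ (fderiv ℝ u) y (rot k l (fderiv ℝ u y)) (rot k l (fderiv ℝ u y))| ≤
        2 * (η * V ^ 2 * h ^ 2) := by
      refine (second_difference_error hh0.le (η := η)
        (fun t ht => hCK _ (hstay y hy k l t ht)) fun t ht => ?_).trans ?_
      · refine (hρη _ (hstay y hy k l t ht) _ (hBK hy) ?_).le
        rw [dist_eq_norm, add_sub_cancel_left]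
        exact (hdisp y hy k l t ht).trans_lt hhρ
      · gcongr
        exact hV y (hBK hy) k l
    calc |G y - h ^ 2 * Φ y|
        = |∑ k, ∑ l, (u (y + h • rot k l (fderiv ℝ u y)) +
          u (y + (-h) • rot k l (fderiv ℝ u y)) - 2 * u y - h ^ 2 *
          fderiv ℝ (fderiv ℝ u) y (rot k l (fderiv ℝ u y)) (rot k l (fderiv ℝ u y)))| := by
          simp only [G, Φ, Finset.mul_sum, ← Finset.sum_sub_distrib]
      _ ≤ ∑ k : Fin n, ∑ l : Fin n, 2 * (η * V ^ 2 * h ^ 2) :=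
          (Finset.abs_sum_le_sum_abs _ _).trans (Finset.sum_le_sum fun k _ =>
            (Finset.abs_sum_le_sum_abs _ _).trans (Finset.sum_le_sum fun l _ => hterm k l))
      _ = h ^ 2 * (ε * r ^ 2 / 4) := by
          simp only [Finset.sum_const, Finset.card_univ, Fintype.card_fin, nsmul_eq_mul, hη]
          field_simp
          ring
  have cG : ContinuousOn (fun y => G y - ε * h ^ 2 * ‖y - x₁‖ ^ 2) (Metric.closedBall x₁ r) := by
    have c1 (s : ℝ) (hs : |s| ≤ h) (k l : Fin n) :
        ContinuousOn (fun y => u (y + s • rot k l (fderiv ℝ u y))) (Metric.closedBall x₁ r) :=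
      cu.comp (continuousOn_id.add
        (((rot k l).continuous.comp_continuousOn (cD1.mono hBK)).const_smul s))
        fun y hy => hstay y hy k l s hs
    refine ContinuousOn.sub (continuousOn_finsetSum _ fun k _ => continuousOn_finsetSum _ fun l _ =>
      ((c1 h habs k l).add (c1 (-h) habs' k l)).sub (continuousOn_const.mul (cu.mono hBK))) ?_
    exact Continuous.continuousOn (by fun_prop)
  obtain ⟨x, hxB, hxmax⟩ := (isCompact_closedBall x₁ r).exists_isMaxOn
    ⟨x₁, Metric.mem_closedBall_self hr0.le⟩ cG
  -- on the sphere the quadratic term outweighs the approximation error, so `x` is interior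
  have hxint : x ∈ Metric.ball x₁ r := by
    by_contra hxn
    have hxr : ‖x - x₁‖ = r := by
      rw [mem_ball_iff_norm, not_lt] at hxn
      rw [mem_closedBall_iff_norm] at hxB
      exact le_antisymm hxB hxn
    have h1 : G x₁ ≤ G x - ε * h ^ 2 * r ^ 2 := by
      have := hxmax (Metric.mem_closedBall_self hr0.le)
      simpa [hxr] using this
    have h2 := (abs_le.mp (hGΦ x hxB)).2
    have h3 := (abs_le.mp (hGΦ x₁ (Metric.mem_closedBall_self hr0.le))).1
    have h4 : h ^ 2 * Φ x ≤ h ^ 2 * Φ x₁ :=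
      mul_le_mul_of_nonneg_left (hmax x (hRΩ (hBK hxB))) (by positivity)
    have h5 : 0 < ε * h ^ 2 * r ^ 2 := by positivity
    linarith
  have hloc : IsLocalMax (fun y => G y - ε * h ^ 2 * ‖y - x₁‖ ^ 2) x :=
    hxmax.isLocalMax (Filter.mem_of_superset (Metric.isOpen_ball.mem_nhds hxint)
      Metric.ball_subset_closedBall)
  have hxΩ : x ∈ Ω := hRΩ (hBK hxB)
  have hineq := max_point_inequality hΩo hC hpos hMA hxΩ
    (fun k l => hRΩ (hstay x hxB k l h habs)) (fun k l => hRΩ (hstay x hxB k l (-h) habs')) hloc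
  have hlog (k l : Fin n) : 0 ≤ 4 * Real.log
      (1 + h ^ 2 * (hess u x k k * hess u x l l - hess u x k l ^ 2)) := by
    have hm : 0 ≤ hess u x k k * hess u x l l - hess u x k l ^ 2 := by
      by_cases hkl : k = l
      · subst hkl; apply le_of_eq; ring
      · exact (minor_pos (hpos x hxΩ) hkl).le
    have := Real.log_nonneg (show 1 ≤ 1 + h ^ 2 *
      (hess u x k k * hess u x l l - hess u x k l ^ 2) from le_add_of_nonneg_right (by positivity))
    linarith
  have hone : 4 * Real.log (1 + h ^ 2 *
      (hess u x i₀ i₀ * hess u x i₁ i₁ - hess u x i₀ i₁ ^ 2)) ≤ 2 * (ε * h ^ 2) * T := by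
    calc _ ≤ ∑ l, 4 * Real.log
          (1 + h ^ 2 * (hess u x i₀ i₀ * hess u x l l - hess u x i₀ l ^ 2)) :=
          Finset.single_le_sum (f := fun l => 4 * Real.log
            (1 + h ^ 2 * (hess u x i₀ i₀ * hess u x l l - hess u x i₀ l ^ 2)))
            (fun l _ => hlog i₀ l) (Finset.mem_univ i₁)
      _ ≤ _ := Finset.single_le_sum (f := fun k => ∑ l, 4 * Real.log
            (1 + h ^ 2 * (hess u x k k * hess u x l l - hess u x k l ^ 2)))
            (fun k _ => Finset.sum_nonneg fun l _ => hlog k l) (Finset.mem_univ i₀)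
      _ ≤ _ := hineq
      _ ≤ _ := mul_le_mul_of_nonneg_left (hT x (hBK hxB)) (by positivity)
  have hlow : h ^ 2 * m₀ / 2 ≤ Real.log (1 + h ^ 2 *
      (hess u x i₀ i₀ * hess u x i₁ i₁ - hess u x i₀ i₁ ^ 2)) := by
    refine (half_le_log_one_add (by positivity) hhm.le).trans ?_
    refine Real.log_le_log (by positivity) ?_
    gcongr
    exact hm₀le x (hBK hxB)
  have hεT : 2 * (ε * h ^ 2) * T = h ^ 2 * m₀ := by
    rw [hε]; field_simp
  have : 0 < h ^ 2 * m₀ := by positivity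
  linarith

end helpers

/-- `H·|Du|³ = Σ b^{kl} u_k u_l` attains its maximum only on the boundary. -/
theorem mean_curvature_strict_max_on_boundary {n : ℕ} (hn : 2 ≤ n)
    (Ω U : Set (EuclideanSpace ℝ (Fin n)))
    (hΩo : IsOpen Ω) (hΩc : Convex ℝ Ω) (hΩb : Bornology.IsBounded Ω)
    (hUo : IsOpen U) (hUcl : closure Ω ⊆ U)
    (u : EuclideanSpace ℝ (Fin n) → ℝ)
    (hu : ContDiffOn ℝ 3 u U)
    (hpos : ∀ x ∈ Ω, (hess u x).PosDef)
    (hMA : ∀ x ∈ Ω, (hess u x).det = 1)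
    (hbd : ∀ x ∈ frontier Ω, u x = 0) :
    ∀ x ∈ Ω,
      (∑ k, ∑ l, bMat u x k l * pd k u x * pd l u x) <
        sSup ((fun y => ∑ k, ∑ l, bMat u y k l * pd k u y * pd l u y) ''
          frontier Ω) := by
  intro x hx
  have hCcl : ∀ y ∈ closure Ω, ContDiffAt ℝ 3 u y := fun y hy =>
    hu.contDiffAt (hUo.mem_nhds (hUcl hy))
  have hC : ∀ y ∈ Ω, ContDiffAt ℝ 3 u y := fun y hy => hCcl y (subset_closure hy)
  have hcl : IsCompact (closure Ω) := hΩb.isCompact_closure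
  set φ : EuclideanSpace ℝ (Fin n) → ℝ :=
    fun y => ∑ k, ∑ l, bMat u y k l * pd k u y * pd l u y with hφ
  have hnomax : ∀ x₁ ∈ Ω, ∃ y ∈ Ω, φ x₁ < φ y := by
    intro x₁ hx₁
    by_contra! hcon
    refine no_interior_max_s13 hn hΩo hC hpos hMA hx₁ fun y hy => ?_
    rw [two_mul_curvature_eq (hC y hy), two_mul_curvature_eq (hC x₁ hx₁)]
    exact mul_le_mul_of_nonneg_left (hcon y hy) (by norm_num)
  have cφ : ContinuousOn φ (closure Ω) := by
    have cH := continuousOn_hess_s13 hCcl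
    have cp (k : Fin n) : ContinuousOn (pd k u) (closure Ω) := by
      have cD1 : ContinuousOn (fderiv ℝ u) (closure Ω) := fun y hy =>
        (hasFDerivAt_grad (hCcl y hy)).continuousAt.continuousWithinAt
      exact cD1.clm_apply continuousOn_const
    have cb (k l : Fin n) : ContinuousOn (fun y => bMat u y k l) (closure Ω) := by
      have ctr : Continuous fun M : Matrix (Fin n) (Fin n) ℝ =>
          (M.trace • (1 : Matrix (Fin n) (Fin n) ℝ) - M) k l := by
        exact ((continuous_id.matrix_trace.smul continuous_const).sub continuous_id).matrix_elem k l
      exact ctr.comp_continuousOn cH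
    exact continuousOn_finsetSum _ fun k _ => continuousOn_finsetSum _ fun l _ =>
      ((cb k l).mul (cp k)).mul (cp l)
  have hbdd : BddAbove (φ '' frontier Ω) :=
    (hcl.bddAbove_image cφ).mono (Set.image_mono frontier_subset_closure)
  obtain ⟨z, hz, hzmax⟩ := hcl.exists_isMaxOn ⟨x, subset_closure hx⟩ cφ
  -- no point of `Ω` is a maximum point of `φ` over `closure Ω`
  have hzfr : z ∈ frontier Ω := by
    rw [hΩo.frontier_eq]
    refine ⟨hz, fun hzΩ => ?_⟩
    obtain ⟨y, hy, hlt⟩ := hnomax z hzΩ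
    exact absurd (hzmax (subset_closure hy)) (not_le.mpr hlt)
  obtain ⟨y, hy, hlt⟩ := hnomax x hx
  exact (hlt.trans_le (hzmax (subset_closure hy))).trans_le
    (le_csSup hbdd (Set.mem_image_of_mem φ hzfr))
end
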